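/- For every integer n ≥ 4, the complex dimension of the diagonal coinvariant ring R_W of the Weyl group W(B_n) strictly exceeds (2n+1)^n; that is, dim_ℂ R_W ≥ (2n+1)^n + 1. -/

import Mathlib

open MvPolynomial

/-- The action of the signed permutation `(ε, σ) ∈ W(Bₙ)` on the polynomial ring
`ℂ[x₁,…,xₙ,y₁,…,yₙ]`, sending `xᵢ ↦ εᵢ x_{σ(i)}` and `yᵢ ↦ εᵢ y_{σ(i)}`. -/
noncomputable def bAct (n : ℕ) (ε : Fin n → ℤˣ) (σ : Equiv.Perm (Fin n)) :
    MvPolynomial (Fin n ⊕ Fin n) ℂ →ₐ[ℂ] MvPolynomial (Fin n ⊕ Fin n) ℂ :=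
  aeval (Sum.elim
    (fun i => (((ε i : ℤ) : ℂ)) • X (Sum.inl (σ i)))
    (fun i => (((ε i : ℤ) : ℂ)) • X (Sum.inr (σ i))))

/-- The ideal `I_W` generated by the `W(Bₙ)`-invariant polynomials of positive degree
(equivalently, by the invariant polynomials with zero constant term). -/
noncomputable def diagIdeal (n : ℕ) : Ideal (MvPolynomial (Fin n ⊕ Fin n) ℂ) :=
  Ideal.span {f | (∀ ε σ, bAct n ε σ f = f) ∧ constantCoeff f = 0}

/-!
The idea. Functions on the weight lattice `ℤⁿ` carry operators `lowering i` and `raising n i` which,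
up to terms of lower order, behave like multiplication by commuting variables `xᵢ` and `yᵢ` on the
orbit of the skew-symmetric function `seed` supported on the permutations of `(1, 3, …, 2n - 1)`.
On the box `[0, 2n]ⁿ` these operators act irreducibly, so the orbit of `seed` contains all
`(2n + 1)ⁿ` delta functions. Hence the quotient of the polynomial ring by the ideal `J` of leading
forms of the annihilator of `seed` has dimension at least `(2n + 1)ⁿ`. An invariant sends `seed` to
a skew function on odd weights, that is, to a multiple of `seed`, so that `I_W ⊆ J`.

The inclusion is strict. A skew function on even weights in the box is determined by `n + 1` values,
so there is a linear relation between the images of `n + 2` symmetric polynomials with odd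
multidegrees: the orbit sums of `y₁ ⋯ yₖ xₖ₊₁ ⋯ xₙ` for `0 ≤ k ≤ n`, of degree `n`, and the orbit
sum of `y₁³ x₂ ⋯ xₙ`. So `J` contains either the latter, or a nonzero combination of the former.
Neither lies in `I_W`: squarefree multidegrees do not occur in `I_W`, and for `n ≥ 4` a linear
functional separates the cubic orbit sum from `I_W`.
-/

namespace DiagonalCoinvariants

section LeadingForms

variable {σ R V : Type*} [CommRing R] [AddCommGroup V] [Module R V]

variable (σ R) in
/-- The polynomials of total degree strictly less than `d`. -/
noncomputable def degreeLT (d : ℕ) : Submodule R (MvPolynomial σ R) :=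
  restrictSupport R {s | s.degree < d}

lemma mem_degreeLT {d : ℕ} {f : MvPolynomial σ R} :
    f ∈ degreeLT σ R d ↔ ∀ s ∈ f.support, s.degree < d :=
  mem_restrictSupport_iff R

lemma monomial_mem_degreeLT {d : ℕ} {s : σ →₀ ℕ} (hs : s.degree < d) (r : R) :
    monomial s r ∈ degreeLT σ R d :=
  (monomial_mem_restrictSupport R).2 (Or.inl hs)

lemma monomial_eq_smul (s : σ →₀ ℕ) (r : R) : monomial s r = r • monomial s (1 : R) := by
  rw [smul_monomial, smul_eq_mul, mul_one]

lemma degreeLT_mono {d e : ℕ} (h : d ≤ e) : degreeLT σ R d ≤ degreeLT σ R e :=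
  restrictSupport_mono R fun _ hs => lt_of_lt_of_le hs h

lemma degreeLT_zero : degreeLT σ R 0 = ⊥ := by
  simp [degreeLT, restrictSupport_eq_span]

lemma degreeLT_induction {P : MvPolynomial σ R → Prop} {d : ℕ} (zero : P 0)
    (add : ∀ f g, P f → P g → P (f + g))
    (monomial : ∀ s : σ →₀ ℕ, s.degree < d → ∀ r, P (monomial s r))
    {f : MvPolynomial σ R} (hf : f ∈ degreeLT σ R d) : P f := by
  rw [f.as_sum]
  exact Finset.sum_induction _ P add zero fun s hs => monomial s (mem_degreeLT.1 hf s hs) _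

lemma mem_degreeLT_of_isHomogeneous {f : MvPolynomial σ R} {d e : ℕ} (hf : f.IsHomogeneous d)
    (h : d < e) : f ∈ degreeLT σ R e :=
  mem_degreeLT.2 fun _ hs => (hf.degree_eq_sum_deg_support hs).symm.trans_lt h

lemma mem_degreeLT_totalDegree_succ (f : MvPolynomial σ R) :
    f ∈ degreeLT σ R (f.totalDegree + 1) :=
  mem_degreeLT.2 fun _ hs => Nat.lt_succ_iff.2 (le_totalDegree hs)

lemma sub_homogeneousComponent_mem_degreeLT {f : MvPolynomial σ R} {d : ℕ}
    (hf : f ∈ degreeLT σ R (d + 1)) : f - homogeneousComponent d f ∈ degreeLT σ R d := by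
  refine mem_degreeLT.2 fun s hs => ?_
  rw [mem_support_iff, coeff_sub, coeff_homogeneousComponent] at hs
  split_ifs at hs with h
  · exact absurd (sub_self _) hs
  · rw [sub_zero, ← mem_support_iff] at hs
    exact lt_of_le_of_ne (Nat.lt_succ_iff.1 (mem_degreeLT.1 hf s hs)) h

lemma X_mul_mem_degreeLT (i : σ) {d : ℕ} {f : MvPolynomial σ R} (hf : f ∈ degreeLT σ R d) :
    X i * f ∈ degreeLT σ R (d + 1) := by
  refine degreeLT_induction (P := fun f => X i * f ∈ degreeLT σ R (d + 1))
    ?_ (fun f g hf hg => ?_) (fun s hs r => ?_) hf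
  · simp only [mul_zero, zero_mem]
  · rw [mul_add]; exact add_mem hf hg
  · rw [X, monomial_mul]
    refine monomial_mem_degreeLT ?_ _
    rw [map_add, Finsupp.degree_single, add_comm]
    exact Nat.succ_lt_succ hs

lemma homogeneousComponent_monomial (d : ℕ) (s : σ →₀ ℕ) (r : R) :
    homogeneousComponent d (monomial s r) = if d = s.degree then monomial s r else 0 :=
  homogeneousComponent_of_mem (isHomogeneous_monomial r rfl)

lemma homogeneousComponent_succ_X_mul (d : ℕ) (i : σ) (f : MvPolynomial σ R) :
    homogeneousComponent (d + 1) (X i * f) = X i * homogeneousComponent d f := by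
  induction f using MvPolynomial.induction_on' with
  | add p q hp hq => rw [mul_add, map_add, hp, hq, map_add, mul_add]
  | monomial s r =>
    rw [X, monomial_mul, homogeneousComponent_monomial, homogeneousComponent_monomial,
      map_add, Finsupp.degree_single, one_mul]
    simp only [add_comm 1, add_left_inj, mul_ite, mul_zero, monomial_mul, one_mul]

lemma homogeneousComponent_zero_X_mul (i : σ) (f : MvPolynomial σ R) :
    homogeneousComponent 0 (X i * f) = 0 := by
  rw [homogeneousComponent_zero, ← constantCoeff_eq, map_mul, constantCoeff_X, zero_mul, map_zero]

/-- The polynomials each of whose homogeneous components is the leading form of an element of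
`ker Φ`. If `Φ` is the orbit map of a filtered module, the quotient by `leadingForms Φ` is the
associated graded module. -/
noncomputable def leadingForms (Φ : MvPolynomial σ R →ₗ[R] V) : Submodule R (MvPolynomial σ R) :=
  ⨅ d, ((degreeLT σ R d).map Φ).comap (Φ ∘ₗ homogeneousComponent d)

variable {Φ : MvPolynomial σ R →ₗ[R] V}

lemma mem_leadingForms {f : MvPolynomial σ R} :
    f ∈ leadingForms Φ ↔ ∀ d, Φ (homogeneousComponent d f) ∈ (degreeLT σ R d).map Φ := by
  simp [leadingForms]

lemma mem_leadingForms_of_isHomogeneous {f : MvPolynomial σ R} {d : ℕ} (hf : f.IsHomogeneous d)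
    (h : Φ f ∈ (degreeLT σ R d).map Φ) : f ∈ leadingForms Φ := by
  refine mem_leadingForms.2 fun e => ?_
  rw [homogeneousComponent_of_mem hf]
  split_ifs with hed
  · exact hed ▸ h
  · simp only [map_zero, zero_mem]

lemma map_eq_range_of_sup_leadingForms_eq_top {B : Submodule R (MvPolynomial σ R)}
    (hB : ∀ d, ∀ b ∈ B, homogeneousComponent d b ∈ B) (h : B ⊔ leadingForms Φ = ⊤) :
    B.map Φ = LinearMap.range Φ := by
  have key : ∀ d, (degreeLT σ R d).map Φ ≤ B.map Φ := by
    intro d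
    induction d with
    | zero => simp only [degreeLT_zero, Submodule.map_bot, bot_le]
    | succ d ih =>
      rintro _ ⟨f, hf, rfl⟩
      obtain ⟨b, hb, j, hj, rfl⟩ := Submodule.mem_sup.1 (h ▸ Submodule.mem_top : f ∈ B ⊔ _)
      have hlow := ih (Submodule.mem_map_of_mem (sub_homogeneousComponent_mem_degreeLT hf))
      rw [← sub_add_cancel (b + j) (homogeneousComponent d (b + j)), map_add]
      refine add_mem hlow ?_
      rw [map_add, map_add]
      exact add_mem (Submodule.mem_map_of_mem (hB d b hb)) (ih (mem_leadingForms.1 hj d))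
  refine le_antisymm LinearMap.map_le_range ?_
  rintro _ ⟨f, rfl⟩
  exact key _ (Submodule.mem_map_of_mem (mem_degreeLT_totalDegree_succ f))

/-- `T i` acts on the filtered module `V` as multiplication by `X i` does on polynomials, up to
terms of lower degree. -/
def ActsAsMulX (Φ : MvPolynomial σ R →ₗ[R] V) (T : σ → Module.End R V) : Prop :=
  ∀ i s, T i (Φ (monomial s 1)) - Φ (monomial (s + Finsupp.single i 1) 1) ∈
    (degreeLT σ R (s.degree + 1)).map Φ

namespace ActsAsMulX

variable {T : σ → Module.End R V}

lemma sub_mem (h : ActsAsMulX Φ T) (i : σ) {d : ℕ} {f : MvPolynomial σ R}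
    (hf : f ∈ degreeLT σ R d) : T i (Φ f) - Φ (X i * f) ∈ (degreeLT σ R d).map Φ := by
  refine degreeLT_induction (P := fun f => T i (Φ f) - Φ (X i * f) ∈ (degreeLT σ R d).map Φ)
    ?_ (fun f g hf hg => ?_) (fun s hs r => ?_) hf
  · simp only [map_zero, mul_zero, sub_zero, zero_mem]
  · simpa only [map_add, mul_add, add_sub_add_comm] using add_mem hf hg
  · rw [monomial_eq_smul, mul_smul_comm, X, monomial_mul, one_mul, add_comm, map_smul, map_smul,
      map_smul, ← smul_sub]
    exact Submodule.smul_mem _ r (Submodule.map_mono (degreeLT_mono hs) (h i s))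

lemma map_degreeLT_succ (h : ActsAsMulX Φ T) (i : σ) {d : ℕ} {v : V}
    (hv : v ∈ (degreeLT σ R d).map Φ) : T i v ∈ (degreeLT σ R (d + 1)).map Φ := by
  obtain ⟨f, hf, rfl⟩ := hv
  rw [← sub_add_cancel (T i (Φ f)) (Φ (X i * f))]
  refine add_mem (Submodule.map_mono (degreeLT_mono d.le_succ) (h.sub_mem i hf))
    (Submodule.mem_map_of_mem (X_mul_mem_degreeLT i hf))

lemma map_range (h : ActsAsMulX Φ T) (i : σ) {v : V} (hv : v ∈ LinearMap.range Φ) :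
    T i v ∈ LinearMap.range Φ := by
  obtain ⟨f, rfl⟩ := hv
  exact LinearMap.map_le_range
    (h.map_degreeLT_succ i (Submodule.mem_map_of_mem (mem_degreeLT_totalDegree_succ f)))

lemma X_mul_mem_leadingForms (h : ActsAsMulX Φ T) (i : σ) {f : MvPolynomial σ R}
    (hf : f ∈ leadingForms Φ) : X i * f ∈ leadingForms Φ := by
  refine mem_leadingForms.2 fun d => ?_
  cases d with
  | zero => simp only [homogeneousComponent_zero_X_mul, map_zero, zero_mem]
  | succ d =>
    have hd := h.sub_mem i
      (mem_degreeLT_of_isHomogeneous (homogeneousComponent_isHomogeneous d f) d.lt_succ_self)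
    rw [homogeneousComponent_succ_X_mul, ← sub_sub_cancel (T i _) (Φ _)]
    exact _root_.sub_mem (h.map_degreeLT_succ i (mem_leadingForms.1 hf d)) hd

lemma mul_mem_leadingForms (h : ActsAsMulX Φ T) (p : MvPolynomial σ R) {f : MvPolynomial σ R}
    (hf : f ∈ leadingForms Φ) : p * f ∈ leadingForms Φ := by
  induction p using MvPolynomial.induction_on generalizing f with
  | C r => rw [C_mul']; exact Submodule.smul_mem _ r hf
  | add p q hp hq => rw [add_mul]; exact add_mem (hp hf) (hq hf)
  | mul_X p i hp => rw [mul_assoc]; exact hp (h.X_mul_mem_leadingForms i hf)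

lemma span_le_leadingForms (h : ActsAsMulX Φ T) {S : Set (MvPolynomial σ R)}
    (hS : S ⊆ leadingForms Φ) : (Ideal.span S).restrictScalars R ≤ leadingForms Φ := by
  intro f hf
  refine Submodule.span_induction (fun f hf => hS hf) (zero_mem _)
    (fun f g _ _ hf hg => add_mem hf hg) (fun p f _ hf => ?_)
    (show f ∈ Ideal.span S from hf)
  exact h.mul_mem_leadingForms p hf

end ActsAsMulX

end LeadingForms

section Finrank

variable {σ K V : Type*} [Field K] [AddCommGroup V] [Module K V]

lemma exists_span_monomial_sup_eq_top (J : Submodule K (MvPolynomial σ K))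
    [Module.Finite K (MvPolynomial σ K ⧸ J)] :
    ∃ s : Fin (Module.finrank K (MvPolynomial σ K ⧸ J)) → σ →₀ ℕ,
      Submodule.span K (Set.range fun i => monomial (s i) (1 : K)) ⊔ J = ⊤ := by
  have hspan : Submodule.span K (Set.range fun s => J.mkQ (monomial s 1)) = ⊤ := by
    have := congrArg (Submodule.map J.mkQ) (basisMonomials σ K).span_eq
    rwa [Submodule.map_span, ← Set.range_comp, Submodule.map_top, Submodule.range_mkQ,
      coe_basisMonomials] at this
  have h := Submodule.exists_fun_fin_finrank_span_eq K
    (Set.range fun s => J.mkQ (monomial s (1 : K)))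
  rw [hspan, finrank_top] at h
  obtain ⟨b, hb, hbspan, -⟩ := h
  choose s hs using hb
  obtain rfl : (fun i => J.mkQ (monomial (s i) 1)) = b := funext hs
  refine ⟨s, ?_⟩
  rw [← Submodule.comap_top J.mkQ, ← hbspan, Set.range_comp' J.mkQ, ← Submodule.map_span,
    Submodule.comap_map_mkQ, sup_comm]

lemma homogeneousComponent_mem_span_monomial {ι : Type*} (s : ι → σ →₀ ℕ) (d : ℕ)
    {f : MvPolynomial σ K} (hf : f ∈ Submodule.span K (Set.range fun i => monomial (s i) (1 : K))) :
    homogeneousComponent d f ∈ Submodule.span K (Set.range fun i => monomial (s i) (1 : K)) := by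
  refine (Submodule.map_span_le (homogeneousComponent d) _ _).2 ?_ (Submodule.mem_map_of_mem hf)
  rintro _ ⟨i, rfl⟩
  rw [homogeneousComponent_monomial]
  split_ifs
  exacts [Submodule.subset_span ⟨i, rfl⟩, zero_mem _]

lemma card_le_finrank_quotient_leadingForms {Φ : MvPolynomial σ K →ₗ[K] V}
    [Module.Finite K (MvPolynomial σ K ⧸ leadingForms Φ)] {ι : Type*} [Fintype ι] {v : ι → V}
    (hv : LinearIndependent K v) (hΦ : ∀ i, v i ∈ LinearMap.range Φ) :
    Fintype.card ι ≤ Module.finrank K (MvPolynomial σ K ⧸ leadingForms Φ) := by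
  obtain ⟨s, hs⟩ := exists_span_monomial_sup_eq_top (leadingForms Φ)
  have hrange := map_eq_range_of_sup_leadingForms_eq_top
    (fun d _ => homogeneousComponent_mem_span_monomial s d) hs
  rw [Submodule.map_span, ← Set.range_comp] at hrange
  have : Module.Finite K (LinearMap.range Φ) :=
    hrange ▸ FiniteDimensional.span_of_finite K (Set.finite_range _)
  have hv' : LinearIndependent K fun i => (⟨v i, hΦ i⟩ : LinearMap.range Φ) :=
    hv.of_comp (LinearMap.range Φ).subtype
  refine hv'.fintype_card_le_finrank.trans ?_
  rw [← hrange]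
  exact (finrank_range_le_card _).trans_eq (Fintype.card_fin _)

end Finrank

section WeightedShifts

variable {ι K : Type*} [CommRing K]

/-- The weight with which the variable `x` lowers an integer weight; it vanishes at `-1`. -/
def lowerWeight (k : ℤ) : K := if Even k then 1 else k + 1

/-- The weight with which the variable `y` raises an integer weight; it vanishes at `2 * N + 1`. -/
def raiseWeight (N : ℕ) (k : ℤ) : K := if Even k then 1 else k - (2 * N + 1)

lemma raiseWeight_mul_lowerWeight (N : ℕ) (k : ℤ) :
    raiseWeight N k * lowerWeight (k - 1) = if Even k then (k : K) else k - (2 * N + 1) := by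
  unfold raiseWeight lowerWeight
  split_ifs with h h' h'
  · exact absurd h' (Int.not_even_iff_odd.2 (h.sub_odd odd_one))
  · push_cast; ring
  · exact mul_one _
  · exact absurd ((Int.not_even_iff_odd.1 h).sub_odd odd_one) h'

variable [DecidableEq ι]

/-- The action of `xᵢ`, lowering the `i`-th weight by one. Functions are thought of as formal sums
of weight vectors, so their argument moves in the opposite direction. -/
def lowering (i : ι) : Module.End K ((ι → ℤ) → K) where
  toFun g m := lowerWeight (m i) * g (m + Pi.single i 1)
  map_add' _ _ := funext fun _ => mul_add _ _ _
  map_smul' _ _ := funext fun _ => mul_left_comm _ _ _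

/-- The action of `yᵢ`, raising the `i`-th weight by one. -/
def raising (N : ℕ) (i : ι) : Module.End K ((ι → ℤ) → K) where
  toFun g m := raiseWeight N (m i) * g (m - Pi.single i 1)
  map_add' _ _ := funext fun _ => mul_add _ _ _
  map_smul' _ _ := funext fun _ => mul_left_comm _ _ _

lemma lowering_apply (i : ι) (g : (ι → ℤ) → K) (m : ι → ℤ) :
    lowering i g m = lowerWeight (m i) * g (m + Pi.single i 1) := rfl

lemma raising_apply (N : ℕ) (i : ι) (g : (ι → ℤ) → K) (m : ι → ℤ) :
    raising N i g m = raiseWeight N (m i) * g (m - Pi.single i 1) := rfl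

/-- The eigenvalue of `raising N i * lowering i` on vectors whose `i`-th weight is `k`. -/
def ladderEigenvalue (N : ℕ) (k : ℤ) : K := raiseWeight N k * lowerWeight (k - 1)

lemma raising_lowering (N : ℕ) (i : ι) (g : (ι → ℤ) → K) :
    raising N i (lowering i g) = (fun m => ladderEigenvalue N (m i)) * g := by
  funext m
  simp only [raising_apply, lowering_apply, Pi.sub_apply, Pi.single_eq_same, sub_add_cancel,
    Pi.mul_apply, ladderEigenvalue, mul_assoc]

lemma lowering_single [DecidableEq (ι → ℤ)] (i : ι) (m : ι → ℤ) :
    lowering i (Pi.single m (1 : K)) =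
      (lowerWeight (m i - 1) : K) • (Pi.single (m - Pi.single i 1) 1 : (ι → ℤ) → K) := by
  funext m'
  by_cases h : m' = m - Pi.single i 1
  · simp [lowering_apply, h]
  · simp [lowering_apply, h, ← eq_sub_iff_add_eq]

lemma raising_single [DecidableEq (ι → ℤ)] (N : ℕ) (i : ι) (m : ι → ℤ) :
    raising N i (Pi.single m (1 : K)) =
      (raiseWeight N (m i + 1) : K) • (Pi.single (m + Pi.single i 1) 1 : (ι → ℤ) → K) := by
  funext m'
  by_cases h : m' = m + Pi.single i 1
  · simp [raising_apply, h]
  · simp [raising_apply, h, sub_eq_iff_eq_add]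

end WeightedShifts

section Box

lemma update_add_single {ι : Type*} [DecidableEq ι] (p : ι → ℤ) (i : ι) (k e : ℤ) :
    Function.update p i k + Pi.single i e = Function.update p i (k + e) := by
  funext j
  by_cases h : j = i
  · subst h; simp
  · simp [h]

lemma forall_mem_Icc_of_add_sub_single {ι : Type*} [Finite ι] [DecidableEq ι]
    {lo hi m₀ : ι → ℤ} {P : (ι → ℤ) → Prop} (hm₀ : m₀ ∈ Set.Icc lo hi) (h₀ : P m₀)
    (hsub : ∀ m ∈ Set.Icc lo hi, ∀ i, lo i < m i → P m → P (m - Pi.single i 1))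
    (hadd : ∀ m ∈ Set.Icc lo hi, ∀ i, m i < hi i → P m → P (m + Pi.single i 1))
    {m : ι → ℤ} (hm : m ∈ Set.Icc lo hi) : P m := by
  have hmem : ∀ {p : ι → ℤ} {i k}, p ∈ Set.Icc lo hi → lo i ≤ k → k ≤ hi i →
      Function.update p i k ∈ Set.Icc lo hi := fun hp hk hk' =>
    ⟨le_update_iff.2 ⟨hk, fun j _ => hp.1 j⟩, update_le_iff.2 ⟨hk', fun j _ => hp.2 j⟩⟩
  have hupdate : ∀ p ∈ Set.Icc lo hi, P p → ∀ i k, lo i ≤ k → k ≤ hi i →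
      P (Function.update p i k) := by
    intro p hp hP i k
    have hloi : lo i ≤ p i := hp.1 i
    have hhii : p i ≤ hi i := hp.2 i
    induction k using Int.inductionOn' (b := p i) with
    | zero => intro _ _; rwa [Function.update_eq_self]
    | succ k hk ih =>
      intro _ hk'
      rw [← update_add_single]
      exact hadd _ (hmem hp (by lia) (by lia)) i (by rw [Function.update_self]; lia)
        (ih (by lia) (by lia))
    | pred k hk ih =>
      intro hk' _
      rw [sub_eq_add_neg, ← update_add_single, Pi.single_neg, ← sub_eq_add_neg]
      exact hsub _ (hmem hp (by lia) (by lia)) i (by rw [Function.update_self]; lia)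
        (ih (by lia) (by lia))
  have hpiecewise : ∀ s : Finset ι, s.piecewise m m₀ ∈ Set.Icc lo hi ∧ P (s.piecewise m m₀) := by
    intro s
    induction s using Finset.induction_on with
    | empty => simpa only [Finset.piecewise_empty] using ⟨hm₀, h₀⟩
    | insert i s _ ih =>
      rw [Finset.piecewise_insert]
      exact ⟨hmem ih.1 (hm.1 i) (hm.2 i), hupdate _ ih.1 ih.2 i _ (hm.1 i) (hm.2 i)⟩
  cases nonempty_fintype ι
  simpa only [Finset.piecewise_univ] using (hpiecewise Finset.univ).2

variable {ι K : Type*}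

/-- The weights all of whose coordinates lie between `0` and `2 * N`. -/
def box (ι : Type*) (N : ℕ) : Set (ι → ℤ) := Set.Icc 0 fun _ => 2 * N

lemma mem_box {N : ℕ} {m : ι → ℤ} : m ∈ box ι N ↔ ∀ i, 0 ≤ m i ∧ m i ≤ 2 * N :=
  forall_and.symm

variable [Field K]

lemma single_mem_of_mul_mem {X : Type*} [DecidableEq X] {U : Submodule K (X → K)}
    {A : Set (X → K)} (hA : ∀ a ∈ A, ∀ g ∈ U, a * g ∈ U) {g : X → K} (hg : g ∈ U)
    {S : Finset X} (hS : Function.support g ⊆ S) {x : X} (hx : g x ≠ 0)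
    (hsep : ∀ y ∈ S, y ≠ x → ∃ a ∈ A, a y ≠ a x) : Pi.single x 1 ∈ U := by
  choose! a haA hax using hsep
  have hmem : ∀ T ⊆ S.erase x, (∏ y ∈ T, (a y - Function.const X (a y y))) * g ∈ U := by
    intro T
    induction T using Finset.induction_on with
    | empty => intro _; rwa [Finset.prod_empty, one_mul]
    | insert y T hy ih =>
      intro hT
      obtain ⟨hyx, hyS⟩ := Finset.mem_erase.1 (hT (Finset.mem_insert_self y T))
      have hT' := ih ((Finset.subset_insert y T).trans hT)
      rw [Finset.prod_insert hy, mul_assoc, sub_mul]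
      exact U.sub_mem (hA _ (haA y hyS hyx) _ hT') (U.smul_mem (a y y) hT')
  set h := (∏ y ∈ S.erase x, (a y - Function.const X (a y y))) * g with hdef
  have hhx : h x ≠ 0 := by
    rw [hdef, Pi.mul_apply, Finset.prod_apply]
    refine mul_ne_zero (Finset.prod_ne_zero_iff.2 fun y hy => ?_) hx
    obtain ⟨hyx, hyS⟩ := Finset.mem_erase.1 hy
    exact sub_ne_zero.2 (hax y hyS hyx).symm
  have hsingle : h = h x • Pi.single x 1 := by
    funext y
    by_cases hyx : y = x
    · simp [hyx]
    rw [Pi.smul_apply, Pi.single_eq_of_ne hyx, smul_zero, hdef, Pi.mul_apply, Finset.prod_apply]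
    by_cases hy : g y = 0
    · rw [hy, mul_zero]
    · rw [Finset.prod_eq_zero (Finset.mem_erase.2 ⟨hyx, hS hy⟩) (sub_self _), zero_mul]
  rw [← inv_smul_smul₀ hhx (Pi.single x 1), ← hsingle]
  exact U.smul_mem _ (hmem _ subset_rfl)

variable [CharZero K]

lemma lowerWeight_ne_zero {k : ℤ} (hk : k ≠ -1) : (lowerWeight k : K) ≠ 0 := by
  unfold lowerWeight
  split_ifs
  · exact one_ne_zero
  · exact mod_cast fun h => hk (eq_neg_of_add_eq_zero_left h)

lemma raiseWeight_ne_zero {N : ℕ} {k : ℤ} (hk : k ≠ 2 * N + 1) : (raiseWeight N k : K) ≠ 0 := by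
  unfold raiseWeight
  split_ifs
  · exact one_ne_zero
  · exact mod_cast sub_ne_zero.2 hk

lemma ladderEigenvalue_injOn (N : ℕ) :
    Set.InjOn (ladderEigenvalue N : ℤ → K) (Set.Icc 0 (2 * N)) := by
  rintro k ⟨hk, hk'⟩ l ⟨hl, hl'⟩ h
  rw [ladderEigenvalue, ladderEigenvalue, raiseWeight_mul_lowerWeight,
    raiseWeight_mul_lowerWeight] at h
  split_ifs at h with hk2 hl2 hl2 <;> norm_cast at h <;> lia

variable [Fintype ι] [DecidableEq ι]

lemma single_mem_of_mem {N : ℕ} {U : Submodule K ((ι → ℤ) → K)}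
    (hlow : ∀ i, ∀ g ∈ U, lowering i g ∈ U) (hraise : ∀ i, ∀ g ∈ U, raising N i g ∈ U)
    {g : (ι → ℤ) → K} (hg : g ∈ U) (hg0 : g ≠ 0) (hbox : Function.support g ⊆ box ι N)
    {m : ι → ℤ} (hm : m ∈ box ι N) : Pi.single m 1 ∈ U := by
  classical
  obtain ⟨m₀, hm₀⟩ := Function.ne_iff.1 hg0
  have hfin : (box ι N).Finite := Set.finite_Icc _ _
  refine forall_mem_Icc_of_add_sub_single (P := fun m => Pi.single m 1 ∈ U) (hbox hm₀)
    ?_ ?_ ?_ hm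
  · refine single_mem_of_mul_mem
      (A := Set.range fun (i : ι) (m : ι → ℤ) => ladderEigenvalue N (m i)) ?_ hg
      (S := hfin.toFinset) (by rwa [hfin.coe_toFinset]) hm₀ ?_
    · rintro _ ⟨i, rfl⟩ g hg
      exact raising_lowering N i g ▸ hraise i _ (hlow i g hg)
    · intro m hm hne
      obtain ⟨i, hi⟩ := Function.ne_iff.1 hne
      refine ⟨_, ⟨i, rfl⟩, fun h => hi (ladderEigenvalue_injOn N ?_ ?_ h)⟩
      exacts [mem_box.1 (hfin.mem_toFinset.1 hm) i, mem_box.1 (hbox hm₀) i]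
  · intro m _ i (hi : 0 < m i) hmU
    have := hlow i _ hmU
    rwa [lowering_single, U.smul_mem_iff (lowerWeight_ne_zero (by lia))] at this
  · intro m _ i (hi : m i < 2 * N) hmU
    have := hraise i _ hmU
    rwa [raising_single, U.smul_mem_iff (raiseWeight_ne_zero (by lia))] at this

end Box

section Multidegree

variable {ι R : Type*}

/-- The degree of the monomial with exponents `s` under the grading in which `xᵢ` and `yᵢ` both
have the `i`-th unit vector as their degree. -/
def multidegree (s : ι ⊕ ι →₀ ℕ) (i : ι) : ℕ := s (Sum.inl i) + s (Sum.inr i)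

lemma multidegree_add (s t : ι ⊕ ι →₀ ℕ) :
    multidegree (s + t) = multidegree s + multidegree t :=
  funext fun _ => add_add_add_comm _ _ _ _

lemma multidegree_eq_zero {s : ι ⊕ ι →₀ ℕ} : multidegree s = 0 ↔ s = 0 := by
  simp [funext_iff, Finsupp.ext_iff, multidegree, Sum.forall, forall_and]

lemma multidegree_mapDomain_apply (σ : Equiv.Perm ι) (s : ι ⊕ ι →₀ ℕ) (i : ι) :
    multidegree (s.mapDomain (Sum.map σ σ)) (σ i) = multidegree s i := by
  have hinj : Function.Injective (Sum.map σ σ) := σ.injective.sumMap σ.injective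
  rw [multidegree, multidegree, ← Finsupp.mapDomain_apply hinj s (Sum.inl i),
    ← Finsupp.mapDomain_apply hinj s (Sum.inr i), Sum.map_inl, Sum.map_inr]

section Fintype

variable [Fintype ι]

/-- The total degree in the variables `yᵢ` of the monomial with exponents `s`. -/
def yDegree (s : ι ⊕ ι →₀ ℕ) : ℕ := ∑ i, s (Sum.inr i)

lemma yDegree_add (s t : ι ⊕ ι →₀ ℕ) : yDegree (s + t) = yDegree s + yDegree t :=
  Finset.sum_add_distrib

lemma yDegree_mapDomain (σ : Equiv.Perm ι) (s : ι ⊕ ι →₀ ℕ) :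
    yDegree (s.mapDomain (Sum.map σ σ)) = yDegree s := by
  have hinj : Function.Injective (Sum.map σ σ) := σ.injective.sumMap σ.injective
  rw [yDegree, ← Equiv.sum_comp σ]
  exact Finset.sum_congr rfl fun i _ => Finsupp.mapDomain_apply hinj s (Sum.inr i)

lemma degree_eq_sum_multidegree (s : ι ⊕ ι →₀ ℕ) : s.degree = ∑ i, multidegree s i := by
  rw [Finsupp.degree_eq_sum, Fintype.sum_sum_type, ← Finset.sum_add_distrib]
  rfl

/-- The exponents of the monomial `xᵃ yᵇ`. -/
noncomputable def pairExponent (a b : ι → ℕ) : ι ⊕ ι →₀ ℕ :=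
  Finsupp.equivFunOnFinite.symm (Sum.elim a b)

lemma multidegree_pairExponent (a b : ι → ℕ) : multidegree (pairExponent a b) = a + b := rfl

lemma yDegree_pairExponent (a b : ι → ℕ) : yDegree (pairExponent a b) = ∑ i, b i := rfl

end Fintype

variable [CommRing R]

/-- Invariance under simultaneous permutations of the `xᵢ` and the `yᵢ`. -/
def IsDiagSymmetric (f : MvPolynomial (ι ⊕ ι) R) : Prop :=
  ∀ σ : Equiv.Perm ι, rename (Sum.map σ σ) f = f

lemma IsDiagSymmetric.homogeneousComponent {f : MvPolynomial (ι ⊕ ι) R} (hf : IsDiagSymmetric f)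
    (d : ℕ) : IsDiagSymmetric (homogeneousComponent d f) := fun σ => by
  rw [rename_homogeneousComponent, hf]

lemma IsDiagSymmetric.coeff_mapDomain {f : MvPolynomial (ι ⊕ ι) R} (hf : IsDiagSymmetric f)
    (σ : Equiv.Perm ι) (s : ι ⊕ ι →₀ ℕ) : coeff (s.mapDomain (Sum.map σ σ)) f = coeff s f := by
  conv_lhs => rw [← hf σ]
  exact coeff_rename_mapDomain _ (σ.injective.sumMap σ.injective) f s

variable (ι R) in
/-- The diagonally symmetric polynomials whose monomials have odd multidegrees. -/
noncomputable def oddSymmetric : Submodule R (MvPolynomial (ι ⊕ ι) R) where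
  carrier := {f | IsDiagSymmetric f ∧ ∀ s ∈ f.support, ∀ i, Odd (multidegree s i)}
  zero_mem' := ⟨fun _ => map_zero _, by simp⟩
  add_mem' hf hg := by
    classical
    exact ⟨fun σ => by rw [map_add, hf.1, hg.1], fun s hs =>
      (Finset.mem_union.1 (support_add hs)).elim (hf.2 s) (hg.2 s)⟩
  smul_mem' r f hf :=
    ⟨fun σ => by rw [map_smul, hf.1], fun s hs => hf.2 s (support_smul hs)⟩

variable [Fintype ι] [DecidableEq ι]

variable (R) in
/-- The sum of the images of a monomial under all simultaneous permutations of the two sets of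
variables. -/
noncomputable def orbitSum (s : ι ⊕ ι →₀ ℕ) : MvPolynomial (ι ⊕ ι) R :=
  ∑ σ : Equiv.Perm ι, monomial (s.mapDomain (Sum.map σ σ)) 1

lemma isDiagSymmetric_orbitSum (s : ι ⊕ ι →₀ ℕ) : IsDiagSymmetric (orbitSum R s) := fun τ => by
  rw [orbitSum, map_sum]
  conv_rhs => rw [← Equiv.sum_comp (Equiv.mulLeft τ)]
  simp only [rename_monomial, ← Finsupp.mapDomain_comp, Sum.map_comp_map, Equiv.coe_mulLeft,
    Equiv.Perm.coe_mul]

lemma exists_of_mem_support_orbitSum {s t : ι ⊕ ι →₀ ℕ} (h : t ∈ (orbitSum R s).support) :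
    ∃ σ : Equiv.Perm ι, t = s.mapDomain (Sum.map σ σ) := by
  obtain ⟨σ, -, hσ⟩ := Finset.mem_biUnion.1 (support_sum h)
  exact ⟨σ, Finset.mem_singleton.1 (support_monomial_subset hσ)⟩

lemma orbitSum_mem_oddSymmetric {s : ι ⊕ ι →₀ ℕ} (hs : ∀ i, Odd (multidegree s i)) :
    orbitSum R s ∈ oddSymmetric ι R := by
  refine ⟨isDiagSymmetric_orbitSum s, fun t ht i => ?_⟩
  obtain ⟨σ, rfl⟩ := exists_of_mem_support_orbitSum ht
  rw [← σ.apply_symm_apply i, multidegree_mapDomain_apply]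
  exact hs _

lemma isHomogeneous_orbitSum (s : ι ⊕ ι →₀ ℕ) : (orbitSum R s).IsHomogeneous s.degree :=
  IsHomogeneous.sum _ _ _ fun _ _ => isHomogeneous_monomial _ (Finsupp.degree_mapDomain _ _)

lemma coeff_orbitSum_eq_zero {s t : ι ⊕ ι →₀ ℕ} (h : yDegree t ≠ yDegree s) :
    coeff t (orbitSum R s) = 0 := by
  by_contra hne
  obtain ⟨σ, rfl⟩ := exists_of_mem_support_orbitSum (mem_support_iff.2 hne)
  exact h (yDegree_mapDomain σ s)

lemma coeff_orbitSum_self_ne_zero [CharZero R] (s : ι ⊕ ι →₀ ℕ) : coeff s (orbitSum R s) ≠ 0 := by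
  classical
  simp only [orbitSum, coeff_sum, coeff_monomial, Finset.sum_boole, ne_eq, Nat.cast_eq_zero]
  exact Finset.card_ne_zero_of_mem (a := 1) (by simp)

end Multidegree

section OrbitMap

variable {ι K : Type*} [CommRing K]

/-- The coefficient picked up by applying `a` lowering operators to the weight `k + a`. -/
def lowerCoeff (k : ℤ) (a : ℕ) : K := ∏ j ∈ Finset.range a, lowerWeight (k + j)

/-- The coefficient picked up by applying `b` raising operators to the weight `k - b`. -/
def raiseCoeff (N : ℕ) (k : ℤ) (b : ℕ) : K := ∏ j ∈ Finset.range b, raiseWeight N (k - j)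

lemma lowerCoeff_succ (k : ℤ) (a : ℕ) :
    (lowerCoeff k (a + 1) : K) = lowerCoeff k a * lowerWeight (k + a) :=
  Finset.prod_range_succ _ _

lemma lowerCoeff_succ' (k : ℤ) (a : ℕ) :
    (lowerCoeff k (a + 1) : K) = lowerWeight k * lowerCoeff (k + 1) a := by
  rw [lowerCoeff, Finset.prod_range_succ', mul_comm, Nat.cast_zero, add_zero, lowerCoeff]
  simp only [Nat.cast_succ, add_assoc, add_comm (1 : ℤ)]

lemma raiseCoeff_succ (N : ℕ) (k : ℤ) (b : ℕ) :
    (raiseCoeff N k (b + 1) : K) = raiseWeight N k * raiseCoeff N (k - 1) b := by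
  rw [raiseCoeff, Finset.prod_range_succ', mul_comm, Nat.cast_zero, sub_zero, raiseCoeff]
  simp only [Nat.cast_succ, sub_sub, add_comm]

/-- The coefficient with which `xᵃ yᵇ` maps the weight `k + a - b` to the weight `k`. -/
def transitionCoeff (N : ℕ) (k : ℤ) (a b : ℕ) : K := lowerCoeff k a * raiseCoeff N (k + a) b

lemma transitionCoeff_succ_left (N : ℕ) (k : ℤ) (a b : ℕ) :
    (transitionCoeff N k (a + 1) b : K) = lowerWeight k * transitionCoeff N (k + 1) a b := by
  rw [transitionCoeff, lowerCoeff_succ', transitionCoeff, mul_assoc, Nat.cast_succ,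
    add_right_comm, add_assoc k]

/-- A priori `c` depends on the parity of `k`, which is the same for all weights `k` that `xᵃ yᵇ`
reaches from odd ones. -/
lemma exists_raiseWeight_mul_transitionCoeff (N a b : ℕ) :
    ∃ c : K, ∀ k : ℤ, Odd (k + a - b) →
      raiseWeight N k * transitionCoeff N (k - 1) (a + 1) b =
        transitionCoeff N k (a + 1) (b + 1) + c * transitionCoeff N k a b := by
  have hcomm : ∃ c : K, ∀ k : ℤ, Odd (k + a - b) →
      (ladderEigenvalue N k : K) = ladderEigenvalue N (k + a + 1) + c := by
    simp only [ladderEigenvalue, raiseWeight_mul_lowerWeight]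
    rcases Nat.even_or_odd a with ha | ha
    · rcases Nat.even_or_odd b with hb | hb
      · refine ⟨-(2 * N + 1) - (a + 1), fun k hk => ?_⟩
        rw [if_neg (by grind), if_pos (by grind)]
        push_cast
        ring
      · refine ⟨2 * N + 1 - (a + 1), fun k hk => ?_⟩
        rw [if_pos (by grind), if_neg (by grind)]
        push_cast
        ring
    · refine ⟨-(a + 1), fun k _ => ?_⟩
      have heven : Even (k + a + 1) ↔ Even k := by grind
      simp only [heven]
      split_ifs <;> push_cast <;> ring
  obtain ⟨c, hc⟩ := hcomm
  refine ⟨c, fun k hk => ?_⟩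
  rw [transitionCoeff_succ_left, sub_add_cancel, ← mul_assoc, ← ladderEigenvalue, hc k hk,
    transitionCoeff, transitionCoeff, lowerCoeff_succ, raiseCoeff_succ, ladderEigenvalue,
    Nat.cast_succ, ← add_assoc, add_sub_cancel_right]
  ring

lemma mem_Icc_of_transitionCoeff_ne_zero {N : ℕ} {k : ℤ} {a b : ℕ}
    (h : (transitionCoeff N k a b : K) ≠ 0) (hk : k + a - b ∈ Set.Icc (0 : ℤ) (2 * N)) :
    k ∈ Set.Icc (0 : ℤ) (2 * N) := by
  have hlower : ∀ j < a, k + j ≠ -1 := fun j hj hkj => h <| by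
    rw [transitionCoeff, lowerCoeff, Finset.prod_eq_zero (Finset.mem_range.2 hj), zero_mul]
    simp [hkj, lowerWeight]
  have hraise : ∀ j < b, k + a - j ≠ 2 * N + 1 := fun j hj hkj => h <| by
    rw [transitionCoeff, raiseCoeff, Finset.prod_eq_zero (Finset.mem_range.2 hj), mul_zero]
    simp [hkj, raiseWeight]
  obtain ⟨hk0, hkN⟩ := hk
  constructor <;> by_contra! hlt
  · exact hlower (-1 - k).toNat (by lia) (by lia)
  · exact hraise (k + a - (2 * N + 1)).toNat (by lia) (by lia)

variable [Fintype ι]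

/-- The vector `xᵃ yᵇ v`, where `a` and `b` are the exponents that `s` assigns to the two sets of
variables. -/
def monomialOrbit (N : ℕ) (v : (ι → ℤ) → K) (s : ι ⊕ ι →₀ ℕ) : (ι → ℤ) → K := fun m =>
  (∏ i, transitionCoeff N (m i) (s (Sum.inl i)) (s (Sum.inr i))) *
    v fun i => m i + s (Sum.inl i) - s (Sum.inr i)

/-- The linear map `f ↦ f v` in which all the `xᵢ` act after all the `yᵢ`. -/
noncomputable def orbitMap (N : ℕ) (v : (ι → ℤ) → K) :
    MvPolynomial (ι ⊕ ι) K →ₗ[K] (ι → ℤ) → K :=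
  (basisMonomials (ι ⊕ ι) K).constr K (monomialOrbit N v)

lemma orbitMap_monomial (N : ℕ) (v : (ι → ℤ) → K) (s : ι ⊕ ι →₀ ℕ) :
    orbitMap N v (monomial s 1) = monomialOrbit N v s := by
  rw [orbitMap, ← Module.Basis.constr_basis (basisMonomials (ι ⊕ ι) K) K (monomialOrbit N v) s,
    coe_basisMonomials]

lemma orbitMap_apply (N : ℕ) (v : (ι → ℤ) → K) (f : MvPolynomial (ι ⊕ ι) K) (m : ι → ℤ) :
    orbitMap N v f m = ∑ s ∈ f.support, coeff s f * monomialOrbit N v s m := by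
  conv_lhs => rw [f.as_sum]
  rw [map_sum, Finset.sum_apply]
  refine Finset.sum_congr rfl fun s _ => ?_
  rw [monomial_eq_smul, map_smul, orbitMap_monomial, Pi.smul_apply, smul_eq_mul]

lemma orbitMap_one (N : ℕ) (v : (ι → ℤ) → K) : orbitMap N v 1 = v := by
  rw [← C_1, C_apply, orbitMap_monomial]
  funext m
  simp [monomialOrbit, transitionCoeff, lowerCoeff, raiseCoeff]

lemma support_orbitMap_subset_box {N : ℕ} {v : (ι → ℤ) → K} (hv : Function.support v ⊆ box ι N)
    (f : MvPolynomial (ι ⊕ ι) K) : Function.support (orbitMap N v f) ⊆ box ι N := by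
  intro m hm
  rw [Function.mem_support, orbitMap_apply] at hm
  obtain ⟨s, -, hs⟩ := Finset.exists_ne_zero_of_sum_ne_zero hm
  have hcoeff := left_ne_zero_of_mul (right_ne_zero_of_mul hs)
  have hvs := right_ne_zero_of_mul (right_ne_zero_of_mul hs)
  refine mem_box.2 fun i => mem_Icc_of_transitionCoeff_ne_zero
    (fun h => hcoeff (Finset.prod_eq_zero (Finset.mem_univ i) h)) (mem_box.1 (hv hvs) i)

lemma orbitMap_apply_eq_zero {N : ℕ} {v : (ι → ℤ) → K} (hv : ∀ m, v m ≠ 0 → ∀ i, Odd (m i))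
    {f : MvPolynomial (ι ⊕ ι) K} {m : ι → ℤ} {i : ι}
    (h : ∀ s ∈ f.support, Even (m i + multidegree s i)) : orbitMap N v f m = 0 := by
  rw [orbitMap_apply]
  refine Finset.sum_eq_zero fun s hs => ?_
  rw [monomialOrbit, not_imp_comm.1 (hv _) fun hodd => ?_, mul_zero, mul_zero]
  have heven := h s hs
  rw [multidegree] at heven
  grind

variable [DecidableEq ι]

/-- The functions that are antisymmetric under permutations of the coordinates. -/
def IsSkew (g : (ι → ℤ) → K) : Prop :=
  ∀ (σ : Equiv.Perm ι) (m : ι → ℤ), g (m ∘ σ) = ((Equiv.Perm.sign σ : ℤ) : K) * g m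

lemma sign_mul_sign_mul (σ : Equiv.Perm ι) (a : K) :
    ((Equiv.Perm.sign σ : ℤ) : K) * (((Equiv.Perm.sign σ : ℤ) : K) * a) = a := by
  rw [← mul_assoc, ← Int.cast_mul, Int.units_coe_mul_self, Int.cast_one, one_mul]

lemma IsSkew.orbitMap_rename {N : ℕ} {v : (ι → ℤ) → K} (hv : IsSkew v) (σ : Equiv.Perm ι)
    (f : MvPolynomial (ι ⊕ ι) K) (m : ι → ℤ) :
    orbitMap N v (rename (Sum.map σ σ) f) m =
      ((Equiv.Perm.sign σ : ℤ) : K) * orbitMap N v f (m ∘ σ) := by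
  have hmono (s : ι ⊕ ι →₀ ℕ) : monomialOrbit N v (s.mapDomain (Sum.map σ σ)) m =
      ((Equiv.Perm.sign σ : ℤ) : K) * monomialOrbit N v s (m ∘ σ) := by
    have hinj : Function.Injective (Sum.map σ σ) := σ.injective.sumMap σ.injective
    have hl (i) : s.mapDomain (Sum.map σ σ) (Sum.inl (σ i)) = s (Sum.inl i) :=
      Finsupp.mapDomain_apply hinj s (Sum.inl i)
    have hr (i) : s.mapDomain (Sum.map σ σ) (Sum.inr (σ i)) = s (Sum.inr i) :=
      Finsupp.mapDomain_apply hinj s (Sum.inr i)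
    rw [monomialOrbit, monomialOrbit, ← Equiv.prod_comp σ, mul_left_comm]
    simp only [hl, hr, Function.comp_apply]
    congr 1
    rw [← sign_mul_sign_mul σ (v _), ← hv σ]
    simp only [Function.comp_def, hl, hr]
  induction f using MvPolynomial.induction_on' with
  | add p q hp hq => simp only [map_add, Pi.add_apply, hp, hq, mul_add]
  | monomial s r =>
    rw [rename_monomial, monomial_eq_smul, monomial_eq_smul s, map_smul, map_smul,
      orbitMap_monomial, orbitMap_monomial, Pi.smul_apply, Pi.smul_apply, hmono, smul_eq_mul,
      smul_eq_mul, mul_left_comm]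

lemma IsSkew.isSkew_orbitMap {N : ℕ} {v : (ι → ℤ) → K} (hv : IsSkew v) {f : MvPolynomial (ι ⊕ ι) K}
    (hf : IsDiagSymmetric f) : IsSkew (orbitMap N v f) := by
  intro σ m
  conv_rhs => rw [← hf σ]
  rw [hv.orbitMap_rename, sign_mul_sign_mul]

variable (N : ℕ) (v : (ι → ℤ) → K) (i : ι) (s : ι ⊕ ι →₀ ℕ)

/-- The factor of `monomialOrbit N v s` that is left after removing the transition coefficient of
the `i`-th coordinate. -/
def awayFactor : (ι → ℤ) → K := fun m =>
  (∏ j ∈ {i}ᶜ, transitionCoeff N (m j) (s (Sum.inl j)) (s (Sum.inr j))) *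
    v fun j => m j + s (Sum.inl j) - s (Sum.inr j)

lemma monomialOrbit_eq_mul_awayFactor (m : ι → ℤ) :
    monomialOrbit N v s m =
      transitionCoeff N (m i) (s (Sum.inl i)) (s (Sum.inr i)) * awayFactor N v i s m := by
  rw [monomialOrbit, awayFactor, Fintype.prod_eq_mul_prod_compl i, mul_assoc]

variable {s} in
lemma awayFactor_congr {t : ι ⊕ ι →₀ ℕ} {m m' : ι → ℤ}
    (hst : ∀ j ≠ i, m j = m' j ∧ s (Sum.inl j) = t (Sum.inl j) ∧ s (Sum.inr j) = t (Sum.inr j))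
    (hi : m i + s (Sum.inl i) - s (Sum.inr i) = m' i + t (Sum.inl i) - t (Sum.inr i)) :
    awayFactor N v i s m = awayFactor N v i t m' := by
  rw [awayFactor, awayFactor]
  congr 1
  · refine Finset.prod_congr rfl fun j hj => ?_
    obtain ⟨hm, hl, hr⟩ := hst j (by simpa using hj)
    rw [hm, hl, hr]
  · congr 1
    funext j
    by_cases h : j = i
    · rw [h, hi]
    · obtain ⟨hm, hl, hr⟩ := hst j h
      rw [hm, hl, hr]

lemma lowering_monomialOrbit :
    lowering i (monomialOrbit N v s) = monomialOrbit N v (s + Finsupp.single (Sum.inl i) 1) := by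
  funext m
  rw [lowering_apply, monomialOrbit_eq_mul_awayFactor N v i, monomialOrbit_eq_mul_awayFactor N v i,
    ← mul_assoc]
  congr 1
  · simp [transitionCoeff_succ_left]
  · refine awayFactor_congr N v i (fun j hj => by simp [hj]) ?_
    simp only [Pi.add_apply, Pi.single_eq_same, Finsupp.coe_add, Finsupp.single_eq_same,
      Nat.cast_add, Nat.cast_one, ne_eq, reduceCtorEq, not_false_eq_true, Finsupp.single_eq_of_ne,
      add_zero]
    ring

lemma raising_monomialOrbit_apply (m : ι → ℤ) :
    raising N i (monomialOrbit N v s) m =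
      raiseWeight N (m i) * transitionCoeff N (m i - 1) (s (Sum.inl i)) (s (Sum.inr i)) *
        awayFactor N v i (s + Finsupp.single (Sum.inr i) 1) m := by
  rw [raising_apply, monomialOrbit_eq_mul_awayFactor N v i, mul_assoc, Pi.sub_apply,
    Pi.single_eq_same]
  congr 2
  refine awayFactor_congr N v i (fun j hj => by simp [hj]) ?_
  simp only [Pi.sub_apply, Pi.single_eq_same, Finsupp.coe_add, Pi.add_apply, ne_eq, reduceCtorEq,
    not_false_eq_true, Finsupp.single_eq_of_ne, add_zero, Finsupp.single_eq_same, Nat.cast_add,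
    Nat.cast_one]
  ring

variable {s} in
lemma raising_monomialOrbit_of_eq_zero (hs : s (Sum.inl i) = 0) :
    raising N i (monomialOrbit N v s) = monomialOrbit N v (s + Finsupp.single (Sum.inr i) 1) := by
  funext m
  rw [raising_monomialOrbit_apply, monomialOrbit_eq_mul_awayFactor N v i]
  simp [transitionCoeff, hs, raiseCoeff_succ, lowerCoeff]

variable {v} in
lemma exists_raising_monomialOrbit (hv : ∀ m, v m ≠ 0 → ∀ i, Odd (m i)) :
    ∃ c : K, raising N i (monomialOrbit N v (s + Finsupp.single (Sum.inl i) 1)) =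
      monomialOrbit N v (s + Finsupp.single (Sum.inl i) 1 + Finsupp.single (Sum.inr i) 1) +
        c • monomialOrbit N v s := by
  obtain ⟨c, hc⟩ :=
    exists_raiseWeight_mul_transitionCoeff (K := K) N (s (Sum.inl i)) (s (Sum.inr i))
  refine ⟨c, funext fun m => ?_⟩
  have haway : awayFactor N v i
      (s + Finsupp.single (Sum.inl i) 1 + Finsupp.single (Sum.inr i) 1) m =
        awayFactor N v i s m := by
    refine awayFactor_congr N v i (fun j hj => by simp [hj]) ?_
    simp only [Pi.add_apply, Finsupp.coe_add, Finsupp.single_eq_same, Nat.cast_add,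
      Nat.cast_one, ne_eq, reduceCtorEq, not_false_eq_true, Finsupp.single_eq_of_ne, add_zero]
    ring
  rw [raising_monomialOrbit_apply, Pi.add_apply, Pi.smul_apply, smul_eq_mul,
    monomialOrbit_eq_mul_awayFactor N v i, monomialOrbit_eq_mul_awayFactor N v i s, haway,
    ← mul_assoc, ← add_mul]
  by_cases hm : awayFactor N v i s m = 0
  · rw [hm, mul_zero, mul_zero]
  · congr 1
    simpa using hc (m i) (hv _ (right_ne_zero_of_mul hm) i)

variable {v} in
lemma actsAsMulX_orbitMap (hv : ∀ m, v m ≠ 0 → ∀ i, Odd (m i)) :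
    ActsAsMulX (orbitMap N v) (Sum.elim lowering (raising N)) := by
  rintro (i | i) s
  · simp only [Sum.elim_inl, orbitMap_monomial, lowering_monomialOrbit, sub_self, zero_mem]
  · simp only [Sum.elim_inr, orbitMap_monomial]
    rcases Nat.eq_zero_or_pos (s (Sum.inl i)) with h | (h : 1 ≤ s (Sum.inl i))
    · rw [raising_monomialOrbit_of_eq_zero N v i h, sub_self]
      exact zero_mem _
    · obtain ⟨t, rfl⟩ := exists_add_of_le (Finsupp.single_le_iff.2 h)
      obtain ⟨c, hc⟩ := exists_raising_monomialOrbit N i t hv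
      rw [add_comm _ t, hc, add_sub_cancel_left, ← orbitMap_monomial]
      refine Submodule.smul_mem _ c (Submodule.mem_map_of_mem (monomial_mem_degreeLT ?_ 1))
      rw [map_add, Finsupp.degree_single]
      lia

end OrbitMap

section SkewFunctions

/-- The increasing weight `(1, 3, …, 2 * n - 1)`, the only one with odd coordinates in the box. -/
def oddWeight (n : ℕ) (i : Fin n) : ℤ := 2 * i + 1

/-- The increasing weight whose coordinates are `0, 2, …, 2 * n` with `2 * k` left out. -/
def evenWeight {n : ℕ} (k : Fin (n + 1)) (i : Fin n) : ℤ := 2 * (k.succAbove i : ℕ)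

lemma eq_of_strictMono_of_odd {n : ℕ} {m : Fin n → ℤ} (hm : StrictMono m)
    (hodd : ∀ i, Odd (m i)) (hbox : m ∈ box (Fin n) n) : m = oddWeight n := by
  choose k hk using hodd
  have hkn (i) : 0 ≤ k i ∧ k i < n := by have := mem_box.1 hbox i; grind
  let f (i : Fin n) : Fin n := ⟨(k i).toNat, by grind⟩
  have hf : StrictMono f := fun i j hij => Fin.mk_lt_mk.2 (by grind [hm hij])
  have hid : f = id := (hf.range_inj strictMono_id).1 <| by
    rw [(Finite.surjective_of_injective hf.injective).range_eq, Set.range_id]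
  funext i
  have hki : (k i).toNat = i := congrArg Fin.val (congrFun hid i)
  rw [hk i, oddWeight]
  grind

lemma exists_succAbove_eq_of_strictMono {n : ℕ} {f : Fin n → Fin (n + 1)} (hf : StrictMono f) :
    ∃ k : Fin (n + 1), f = k.succAbove := by
  obtain ⟨k, hk⟩ : ∃ k, k ∉ Set.range f := by
    by_contra! h
    simpa using Fintype.card_le_of_surjective f h
  refine ⟨k, (hf.range_inj (Fin.strictMono_succAbove k)).1 ?_⟩
  refine Set.eq_of_subset_of_ncard_le ?_ ?_
  · rw [Fin.range_succAbove]
    exact Set.subset_compl_singleton_iff.2 hk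
  · rw [Set.ncard_range_of_injective hf.injective,
      Set.ncard_range_of_injective Fin.succAbove_right_injective]

lemma exists_eq_succAbove_of_strictMono_of_even {n : ℕ} {m : Fin n → ℤ} (hm : StrictMono m)
    (heven : ∀ i, Even (m i)) (hbox : m ∈ box (Fin n) n) :
    ∃ k : Fin (n + 1), m = evenWeight k := by
  choose l hl using heven
  have hln (i) : 0 ≤ l i ∧ l i ≤ n := by have := mem_box.1 hbox i; grind
  let f (i : Fin n) : Fin (n + 1) := ⟨(l i).toNat, by grind⟩
  obtain ⟨k, hk⟩ := exists_succAbove_eq_of_strictMono (f := f)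
    fun i j hij => Fin.mk_lt_mk.2 (by grind [hm hij])
  refine ⟨k, funext fun i => ?_⟩
  have hli : (l i).toNat = (k.succAbove i : ℕ) := congrArg Fin.val (congrFun hk i)
  rw [hl i, evenWeight]
  grind

variable {n : ℕ} {K : Type*} [Field K]

lemma IsSkew.eq_zero_of_strictMono [CharZero K] {g : (Fin n → ℤ) → K} (hg : IsSkew g)
    (h : ∀ m, StrictMono m → g m = 0) : g = 0 := by
  funext m
  by_cases hm : Function.Injective m
  · have hsort := h _ ((Tuple.monotone_sort m).strictMono_of_injective
      (hm.comp (Tuple.sort m).injective))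
    rw [← sign_mul_sign_mul (Tuple.sort m) (g m), ← hg, hsort, mul_zero, Pi.zero_apply]
  · obtain ⟨i, j, hij, hne⟩ := Function.not_injective_iff.1 hm
    have hswap := hg (Equiv.swap i j) m
    rw [Equiv.comp_swap_eq_update, hij, Function.update_eq_self, ← hij, Function.update_eq_self,
      Equiv.Perm.sign_swap hne, Units.val_neg, Units.val_one, Int.cast_neg, Int.cast_one,
      neg_one_mul] at hswap
    exact self_eq_neg.1 hswap

lemma IsSkew.eq_zero_of_even [CharZero K] {g : (Fin n → ℤ) → K} (hg : IsSkew g)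
    (heven : ∀ m, g m ≠ 0 → ∀ i, Even (m i)) (hbox : Function.support g ⊆ box (Fin n) n)
    (h : ∀ k : Fin (n + 1), g (evenWeight k) = 0) : g = 0 := by
  refine hg.eq_zero_of_strictMono fun m hm => ?_
  by_contra hgm
  obtain ⟨k, rfl⟩ := exists_eq_succAbove_of_strictMono_of_even hm (heven m hgm) (hbox hgm)
  exact hgm (h k)

variable (n K) in
/-- The antisymmetrization of the weight vector of weight `oddWeight n`. -/
def seed : (Fin n → ℤ) → K := fun m =>
  (Matrix.of fun i j : Fin n => if m i = oddWeight n j then (1 : K) else 0).det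

lemma isSkew_seed : IsSkew (seed n K) := fun σ m =>
  Matrix.det_permute σ (Matrix.of fun i j => if m i = oddWeight n j then (1 : K) else 0)

lemma seed_apply_odd : seed n K (oddWeight n) = 1 := by
  rw [← Matrix.det_one (n := Fin n) (R := K), seed]
  congr 1
  ext i j
  simp [Matrix.one_apply, oddWeight, Fin.ext_iff]

lemma exists_eq_of_seed_ne_zero {m : Fin n → ℤ} (h : seed n K m ≠ 0) (i : Fin n) :
    ∃ j, m i = oddWeight n j := by
  by_contra! hi
  exact h (Matrix.det_eq_zero_of_row_eq_zero i fun j => if_neg (hi j))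

lemma odd_of_seed_ne_zero {m : Fin n → ℤ} (h : seed n K m ≠ 0) (i : Fin n) : Odd (m i) :=
  (exists_eq_of_seed_ne_zero h i).elim fun j hj => ⟨j, hj⟩

lemma support_seed_subset_box : Function.support (seed n K) ⊆ box (Fin n) n := by
  refine fun m hm => mem_box.2 fun i => ?_
  obtain ⟨j, hj⟩ := exists_eq_of_seed_ne_zero hm i
  rw [oddWeight] at hj
  grind

lemma IsSkew.eq_smul_seed [CharZero K] {g : (Fin n → ℤ) → K} (hg : IsSkew g)
    (hodd : ∀ m, g m ≠ 0 → ∀ i, Odd (m i)) (hbox : Function.support g ⊆ box (Fin n) n) :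
    g = g (oddWeight n) • seed n K := by
  have hskew : IsSkew (g - g (oddWeight n) • seed n K) := fun σ m => by
    simp only [Pi.sub_apply, Pi.smul_apply, smul_eq_mul, hg σ m, isSkew_seed σ m]
    ring
  refine sub_eq_zero.1 (hskew.eq_zero_of_strictMono fun m hm => ?_)
  by_cases hmo : m = oddWeight n
  · rw [hmo, Pi.sub_apply, Pi.smul_apply, seed_apply_odd, smul_eq_mul, mul_one, sub_self]
  have hg0 : g m = 0 := by
    by_contra h
    exact hmo (eq_of_strictMono_of_odd hm (hodd m h) (hbox h))
  have hs0 : seed n K m = 0 := by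
    by_contra h
    exact hmo (eq_of_strictMono_of_odd hm (odd_of_seed_ne_zero h) (support_seed_subset_box h))
  rw [Pi.sub_apply, Pi.smul_apply, hg0, hs0, smul_zero, sub_zero]

end SkewFunctions

section SymmetricLeadingForms

variable {n : ℕ} {K : Type*} [Field K] [CharZero K] {f : MvPolynomial (Fin n ⊕ Fin n) K}

lemma orbitMap_seed_eq_smul (hf : IsDiagSymmetric f)
    (heven : ∀ s ∈ f.support, ∀ i, Even (multidegree s i)) :
    orbitMap n (seed n K) f = orbitMap n (seed n K) f (oddWeight n) • seed n K := by
  refine (isSkew_seed.isSkew_orbitMap hf).eq_smul_seed (fun m hm i => ?_)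
    (support_orbitMap_subset_box support_seed_subset_box f)
  by_contra h
  refine hm (orbitMap_apply_eq_zero (fun _ => odd_of_seed_ne_zero) (i := i) fun s hs => ?_)
  exact (Int.not_odd_iff_even.1 h).add (mod_cast heven s hs i)

lemma mem_leadingForms_of_even (hf : IsDiagSymmetric f)
    (heven : ∀ s ∈ f.support, ∀ i, Even (multidegree s i)) (hf0 : constantCoeff f = 0) :
    f ∈ leadingForms (orbitMap n (seed n K)) := by
  refine mem_leadingForms.2 fun d => ?_
  rcases Nat.eq_zero_or_pos d with rfl | hd
  · rw [homogeneousComponent_zero, ← constantCoeff_eq, hf0, map_zero, map_zero]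
    exact zero_mem _
  · rw [orbitMap_seed_eq_smul (hf.homogeneousComponent d) fun s hs => heven s ?_]
    · refine Submodule.smul_mem _ _ ⟨1, ?_, orbitMap_one _ _⟩
      exact mem_degreeLT_of_isHomogeneous (isHomogeneous_one _ _) hd
    · rw [mem_support_iff, coeff_homogeneousComponent] at hs
      exact mem_support_iff.2 (ite_ne_right_iff.1 hs).2

lemma orbitMap_seed_eq_zero_of_mem_oddSymmetric (hf : f ∈ oddSymmetric (Fin n) K)
    (h : ∀ k, orbitMap n (seed n K) f (evenWeight k) = 0) : orbitMap n (seed n K) f = 0 := by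
  refine (isSkew_seed.isSkew_orbitMap hf.1).eq_zero_of_even (fun m hm i => ?_)
    (support_orbitMap_subset_box support_seed_subset_box f) h
  by_contra hmi
  refine hm (orbitMap_apply_eq_zero (fun _ => odd_of_seed_ne_zero) (i := i) fun s hs => ?_)
  exact (Int.not_even_iff_odd.1 hmi).add_odd (mod_cast hf.2 s hs i)

/-- The exponents of the monomial `y₀ ⋯ yₖ₋₁ xₖ ⋯ xₙ₋₁`. -/
noncomputable def squarefreeExponent (n k : ℕ) : Fin n ⊕ Fin n →₀ ℕ :=
  pairExponent (fun i => if (i : ℕ) < k then 0 else 1) fun i => if (i : ℕ) < k then 1 else 0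

lemma multidegree_squarefreeExponent (n k : ℕ) : multidegree (squarefreeExponent n k) = 1 := by
  funext i
  rw [squarefreeExponent, multidegree_pairExponent, Pi.add_apply]
  split_ifs <;> rfl

lemma yDegree_squarefreeExponent {n k : ℕ} (hk : k ≤ n) :
    yDegree (squarefreeExponent n k) = k := by
  rw [squarefreeExponent, yDegree_pairExponent, Finset.sum_boole, Fin.card_filter_val_lt,
    min_eq_right hk, Nat.cast_id]

/-- The exponents of the monomial `yᵢ³ ∏ xⱼ`, where `j` ranges over the indices other than `i`. -/
noncomputable def cubicExponent {ι : Type*} [Fintype ι] [DecidableEq ι] (i : ι) : ι ⊕ ι →₀ ℕ :=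
  pairExponent (Function.update 1 i 0) (Pi.single i 3)

lemma multidegree_cubicExponent {ι : Type*} [Fintype ι] [DecidableEq ι] (i : ι) :
    multidegree (cubicExponent i) = 1 + Pi.single i 2 := by
  funext j
  rw [cubicExponent, multidegree_pairExponent]
  by_cases h : j = i
  · subst h; simp
  · simp [h]

lemma yDegree_cubicExponent {ι : Type*} [Fintype ι] [DecidableEq ι] (i : ι) :
    yDegree (cubicExponent i) = 3 := by
  rw [cubicExponent, yDegree_pairExponent, Fintype.sum_pi_single']

lemma isHomogeneous_orbitSum_squarefreeExponent {R : Type*} [CommRing R] (n k : ℕ) :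
    (orbitSum R (squarefreeExponent n k)).IsHomogeneous n := by
  convert isHomogeneous_orbitSum (R := R) (squarefreeExponent n k)
  simp [degree_eq_sum_multidegree, multidegree_squarefreeExponent]

lemma isHomogeneous_orbitSum_cubicExponent {R : Type*} [CommRing R] (i : Fin n) :
    (orbitSum R (cubicExponent i)).IsHomogeneous (n + 2) := by
  convert isHomogeneous_orbitSum (R := R) (cubicExponent i)
  simp [degree_eq_sum_multidegree, multidegree_cubicExponent, Finset.sum_add_distrib]

lemma orbitSum_mem_leadingForms_or (i : Fin n) :
    orbitSum K (cubicExponent i) ∈ leadingForms (orbitMap n (seed n K)) ∨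
      ∃ c : Fin (n + 1) → K, c ≠ 0 ∧
        ∑ k, c k • orbitSum K (squarefreeExponent n k) ∈ leadingForms (orbitMap n (seed n K)) := by
  let Φ := orbitMap n (seed n K)
  let f₀ := orbitSum K (cubicExponent i)
  let g := Fintype.linearCombination K fun k : Fin (n + 1) => orbitSum K (squarefreeExponent n k)
  let L : (Fin (n + 1) → K) →ₗ[K] Fin (n + 1) → K := LinearMap.funLeft K K evenWeight ∘ₗ Φ ∘ₗ g
  have hf₀odd : f₀ ∈ oddSymmetric (Fin n) K := orbitSum_mem_oddSymmetric fun j => by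
    rw [multidegree_cubicExponent, Pi.add_apply, Pi.one_apply, Pi.single_apply]
    split_ifs <;> decide
  have hgodd (c) : g c ∈ oddSymmetric (Fin n) K := Submodule.sum_smul_mem _ _ fun k _ =>
    orbitSum_mem_oddSymmetric fun j => by simp [multidegree_squarefreeExponent]
  have hg (c) : (g c).IsHomogeneous n := IsHomogeneous.sum _ _ _ fun k _ =>
    (homogeneousSubmodule _ _ n).smul_mem _ (isHomogeneous_orbitSum_squarefreeExponent n k)
  by_cases hL : Function.Injective L
  · obtain ⟨c, hc⟩ := LinearMap.injective_iff_surjective.1 hL fun k => Φ f₀ (evenWeight k)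
    refine Or.inl (mem_leadingForms_of_isHomogeneous (isHomogeneous_orbitSum_cubicExponent i)
      ⟨g c, mem_degreeLT_of_isHomogeneous (hg c) (by lia), ?_⟩)
    rw [← sub_eq_zero, ← map_sub]
    refine orbitMap_seed_eq_zero_of_mem_oddSymmetric (sub_mem (hgodd c) hf₀odd) fun k => ?_
    rw [map_sub, Pi.sub_apply, sub_eq_zero]
    exact congrFun hc k
  · rw [← LinearMap.ker_eq_bot, ← ne_eq, Submodule.ne_bot_iff] at hL
    obtain ⟨c, hc, hc0⟩ := hL
    refine Or.inr ⟨c, hc0, mem_leadingForms_of_isHomogeneous (hg c) ?_⟩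
    change Φ (g c) ∈ _
    rw [orbitMap_seed_eq_zero_of_mem_oddSymmetric (hgodd c) fun k => congrFun hc k]
    exact zero_mem _

end SymmetricLeadingForms

section CubicFunctional

variable {ι K : Type*} [CommRing K]

/-- The solution of the recursion `mul_cubicWeight_succ_add`, scaled to be integral. -/
def cubicWeight (n : ℕ) : ℕ → K
  | 0 => -6
  | 1 => 2 * (n - 3)
  | 2 => -((n - 2) * (n - 3))
  | 3 => (n - 1) * (n - 2) * (n - 3)
  | _ + 4 => 0

lemma mul_cubicWeight_succ_add (n : ℕ) {a c : ℕ} (h : a + c = 3) (hc : c ≤ 2) :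
    (a * cubicWeight n (c + 1) + (n - a) * cubicWeight n c : K) = 0 := by
  obtain rfl : a = 3 - c := by lia
  interval_cases c <;> simp only [cubicWeight] <;> push_cast <;> ring

lemma cubicWeight_three_ne_zero [CharZero K] {n : ℕ} (hn : 4 ≤ n) :
    (cubicWeight n 3 : K) ≠ 0 := by
  obtain ⟨k, rfl⟩ := Nat.exists_eq_add_of_le' hn
  have h : (cubicWeight (k + 4) 3 : K) = ((k + 3) * (k + 2) * (k + 1) : ℕ) := by
    rw [cubicWeight]
    push_cast
    ring
  rw [h]
  exact Nat.cast_ne_zero.2 (by positivity)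

lemma sum_cubicWeight_eq_zero [Fintype ι] {t : ι ⊕ ι →₀ ℕ} (ht : multidegree t = 1) {c : ℕ}
    (h : yDegree t + c = 3) (hc : c ≤ 2) :
    ∑ i, (cubicWeight (Fintype.card ι) (t (Sum.inr i) + c) : K) = 0 := by
  have hi (i) : (cubicWeight (Fintype.card ι) (t (Sum.inr i) + c) : K) =
      t (Sum.inr i) * cubicWeight (Fintype.card ι) (c + 1) +
        (1 - t (Sum.inr i)) * cubicWeight (Fintype.card ι) c := by
    have hle : t (Sum.inr i) ≤ 1 := (Nat.le_add_left _ _).trans_eq (congrFun ht i)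
    interval_cases t (Sum.inr i) <;> simp [add_comm]
  rw [← mul_cubicWeight_succ_add (K := K) (Fintype.card ι) h hc,
    Finset.sum_congr rfl fun i _ => hi i, Finset.sum_add_distrib, ← Finset.sum_mul,
    ← Finset.sum_mul, Finset.sum_sub_distrib, yDegree]
  simp

/-- The exponents of the monomial `xᵢ²⁻ᶜ yᵢᶜ`, for `c ≤ 2`. -/
noncomputable def quadraticExponent (i : ι) (c : ℕ) : ι ⊕ ι →₀ ℕ :=
  Finsupp.single (Sum.inl i) (2 - c) + Finsupp.single (Sum.inr i) c

lemma IsDiagSymmetric.coeff_quadraticExponent {f : MvPolynomial (ι ⊕ ι) K}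
    (hf : IsDiagSymmetric f) (i j : ι) (c : ℕ) :
    coeff (quadraticExponent i c) f = coeff (quadraticExponent j c) f := by
  classical
  rw [← hf.coeff_mapDomain (Equiv.swap i j)]
  simp only [quadraticExponent, Finsupp.mapDomain_add, Finsupp.mapDomain_single, Sum.map_inl,
    Sum.map_inr, Equiv.swap_apply_left]

variable [DecidableEq ι]

lemma multidegree_quadraticExponent (i : ι) {c : ℕ} (hc : c ≤ 2) :
    multidegree (quadraticExponent i c) = Pi.single i 2 := by
  funext j
  by_cases h : j = i
  · subst h
    simp [multidegree, quadraticExponent, hc]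
  · simp [multidegree, quadraticExponent, h]

lemma eq_one_or_eq_zero_of_add_eq {a b : ι → ℕ} {i : ι} (h : a + b = 1 + Pi.single i 2)
    (hb : ∀ j, Even (b j)) : a = 1 ∨ b = 0 := by
  have hne (j) (hj : j ≠ i) : a j = 1 ∧ b j = 0 := by
    have hab : a j + b j = 1 := by simpa [hj] using congrFun h j
    grind
  have hi : a i = 1 ∨ b i = 0 := by
    have hab : a i + b i = 1 + 2 := by simpa using congrFun h i
    grind
  exact hi.imp (fun ha => funext fun j => (eq_or_ne j i).elim (· ▸ ha) fun hj => (hne j hj).1)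
    fun hb => funext fun j => (eq_or_ne j i).elim (· ▸ hb) fun hj => (hne j hj).2

variable [Fintype ι]

/-- The value of `cubicFunctional` on the monomial with exponents `s`. -/
def cubicFunctionalMonomial (s : ι ⊕ ι →₀ ℕ) : K :=
  ∑ i, if multidegree s = 1 + Pi.single i 2 ∧ yDegree s = 3 then
    cubicWeight (Fintype.card ι) (s (Sum.inr i)) else 0

variable (ι K) in
/-- A functional that annihilates the ideal of invariants but not the orbit sum of
`cubicExponent i`. It only sees the monomials in the multidegrees of such orbit sums. -/
noncomputable def cubicFunctional : MvPolynomial (ι ⊕ ι) K →ₗ[K] K :=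
  (basisMonomials (ι ⊕ ι) K).constr K cubicFunctionalMonomial

lemma cubicFunctional_monomial (s : ι ⊕ ι →₀ ℕ) :
    cubicFunctional ι K (monomial s 1) = cubicFunctionalMonomial s := by
  rw [cubicFunctional]
  exact Module.Basis.constr_basis (basisMonomials (ι ⊕ ι) K) K cubicFunctionalMonomial s

lemma cubicFunctional_monomial_mul (t : ι ⊕ ι →₀ ℕ) (f : MvPolynomial (ι ⊕ ι) K) :
    cubicFunctional ι K (monomial t 1 * f) =
      ∑ u ∈ f.support, coeff u f * cubicFunctionalMonomial (t + u) := by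
  conv_lhs => rw [f.as_sum, Finset.mul_sum, map_sum]
  refine Finset.sum_congr rfl fun u _ => ?_
  rw [monomial_mul, one_mul, monomial_eq_smul, map_smul, cubicFunctional_monomial, smul_eq_mul]

lemma cubicFunctionalMonomial_mapDomain (σ : Equiv.Perm ι) (s : ι ⊕ ι →₀ ℕ) :
    (cubicFunctionalMonomial (s.mapDomain (Sum.map σ σ)) : K) = cubicFunctionalMonomial s := by
  have hr (i) : s.mapDomain (Sum.map σ σ) (Sum.inr (σ i)) = s (Sum.inr i) :=
    Finsupp.mapDomain_apply (σ.injective.sumMap σ.injective) s (Sum.inr i)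
  have hmulti (i) : multidegree (s.mapDomain (Sum.map σ σ)) = 1 + Pi.single (σ i) 2 ↔
      multidegree s = 1 + Pi.single i 2 := by
    rw [funext_iff, funext_iff, ← σ.forall_congr_right]
    simp only [multidegree_mapDomain_apply, Pi.add_apply, Pi.one_apply, Pi.single_apply,
      σ.apply_eq_iff_eq]
  rw [cubicFunctionalMonomial, cubicFunctionalMonomial, ← Equiv.sum_comp σ]
  simp only [hmulti, yDegree_mapDomain, hr]

lemma cubicFunctionalMonomial_cubicExponent (i : ι) :
    (cubicFunctionalMonomial (cubicExponent i) : K) = cubicWeight (Fintype.card ι) 3 := by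
  rw [cubicFunctionalMonomial, Fintype.sum_eq_single i]
  · rw [if_pos ⟨multidegree_cubicExponent i, yDegree_cubicExponent i⟩]
    exact congrArg _ (Pi.single_eq_same (M := fun _ => ℕ) i 3)
  · intro j hj
    refine if_neg fun h => ?_
    rw [multidegree_cubicExponent, add_right_inj] at h
    simpa [hj] using congrFun h.1 j

lemma cubicFunctional_orbitSum_cubicExponent (i : ι) :
    cubicFunctional ι K (orbitSum K (cubicExponent i)) =
      Fintype.card (Equiv.Perm ι) * cubicWeight (Fintype.card ι) 3 := by
  simp only [orbitSum, map_sum, cubicFunctional_monomial, cubicFunctionalMonomial_mapDomain,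
    cubicFunctionalMonomial_cubicExponent, Finset.sum_const, Finset.card_univ, nsmul_eq_mul]

lemma yDegree_le_of_multidegree_eq_single {i : ι} {d : ℕ} {u : ι ⊕ ι →₀ ℕ}
    (hu : multidegree u = Pi.single i d) : yDegree u ≤ d := by
  calc yDegree u ≤ ∑ j, multidegree u j := Finset.sum_le_sum fun j _ => Nat.le_add_left _ _
    _ = d := by rw [hu, Fintype.sum_pi_single']

lemma eq_quadraticExponent_iff {i : ι} {c : ℕ} (hc : c ≤ 2) {u : ι ⊕ ι →₀ ℕ} :
    u = quadraticExponent i c ↔ multidegree u = Pi.single i 2 ∧ yDegree u = c := by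
  constructor
  · rintro rfl
    exact ⟨multidegree_quadraticExponent i hc,
      by simp [yDegree, quadraticExponent, Finsupp.single_apply]⟩
  rintro ⟨hu, rfl⟩
  have hne (j) (hj : j ≠ i) : u (Sum.inl j) = 0 ∧ u (Sum.inr j) = 0 := by
    simpa [multidegree, hj] using congrFun hu j
  have hy : yDegree u = u (Sum.inr i) := Fintype.sum_eq_single i fun j hj => (hne j hj).2
  have hi : u (Sum.inl i) + u (Sum.inr i) = 2 := by simpa [multidegree] using congrFun hu i
  ext (j | j) <;> by_cases hj : j = i
  · subst hj
    simp [quadraticExponent, hy, ← hi]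
  · simp [quadraticExponent, hj, hne]
  · subst hj
    simp [quadraticExponent, hy]
  · simp [quadraticExponent, hj, hne]

lemma cubicFunctionalMonomial_add_eq_sum {t : ι ⊕ ι →₀ ℕ} (ht : multidegree t = 1) {c : ℕ}
    (h : yDegree t + c = 3) (hc : c ≤ 2) (u : ι ⊕ ι →₀ ℕ) :
    (cubicFunctionalMonomial (t + u) : K) = ∑ i, if u = quadraticExponent i c then
      cubicWeight (Fintype.card ι) (t (Sum.inr i) + c) else 0 := by
  refine Finset.sum_congr rfl fun i _ => ?_
  have hiff : (multidegree (t + u) = 1 + Pi.single i 2 ∧ yDegree (t + u) = 3) ↔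
      u = quadraticExponent i c := by
    rw [eq_quadraticExponent_iff hc, multidegree_add, ht, add_right_inj, yDegree_add, ← h,
      add_right_inj]
  simp only [hiff]
  split_ifs with hu
  · simp [hu, quadraticExponent]
  · rfl

lemma cubicFunctionalMonomial_add_eq_zero {t : ι ⊕ ι →₀ ℕ} (ht : multidegree t = 1)
    (h : ∀ c ≤ 2, yDegree t + c ≠ 3) (u : ι ⊕ ι →₀ ℕ) :
    (cubicFunctionalMonomial (t + u) : K) = 0 := by
  refine Finset.sum_eq_zero fun i _ => if_neg fun hi => ?_
  rw [multidegree_add, ht, add_right_inj, yDegree_add] at hi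
  exact h _ (yDegree_le_of_multidegree_eq_single hi.1) hi.2

lemma cubicFunctional_monomial_mul_eq_zero_of_multidegree_eq {t : ι ⊕ ι →₀ ℕ}
    (ht : multidegree t = 1) {f : MvPolynomial (ι ⊕ ι) K} (hf : IsDiagSymmetric f) :
    cubicFunctional ι K (monomial t 1 * f) = 0 := by
  rw [cubicFunctional_monomial_mul]
  by_cases h : ∃ c ≤ 2, yDegree t + c = 3
  · obtain ⟨c, hc, h⟩ := h
    calc ∑ u ∈ f.support, coeff u f * cubicFunctionalMonomial (t + u)
        = ∑ i, coeff (quadraticExponent i c) f *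
            cubicWeight (Fintype.card ι) (t (Sum.inr i) + c) := by
          simp only [cubicFunctionalMonomial_add_eq_sum ht h hc, Finset.mul_sum]
          rw [Finset.sum_comm]
          simp only [mul_ite, mul_zero, Finset.sum_ite_eq', mem_support_iff]
          exact Finset.sum_congr rfl fun i _ => ite_eq_left_iff.2 fun h0 => by
            rw [notMem_support_iff.1 h0, zero_mul]
      _ = 0 := by
          rcases isEmpty_or_nonempty ι with _ | ⟨⟨i⟩⟩
          · exact Fintype.sum_empty _
          · simp only [hf.coeff_quadraticExponent _ i, ← Finset.mul_sum,
              sum_cubicWeight_eq_zero ht h hc, mul_zero]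
  · push Not at h
    exact Finset.sum_eq_zero fun u _ => by
      rw [cubicFunctionalMonomial_add_eq_zero ht h, mul_zero]

lemma cubicFunctional_monomial_mul_eq_zero (t : ι ⊕ ι →₀ ℕ) {f : MvPolynomial (ι ⊕ ι) K}
    (hf : IsDiagSymmetric f) (heven : ∀ s ∈ f.support, ∀ i, Even (multidegree s i))
    (hf0 : constantCoeff f = 0) : cubicFunctional ι K (monomial t 1 * f) = 0 := by
  by_cases ht : multidegree t = 1
  · exact cubicFunctional_monomial_mul_eq_zero_of_multidegree_eq ht hf
  rw [cubicFunctional_monomial_mul]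
  refine Finset.sum_eq_zero fun u hu => ?_
  have hmulti (i) : multidegree (t + u) ≠ 1 + Pi.single i 2 := by
    rw [multidegree_add]
    intro h
    rcases eq_one_or_eq_zero_of_add_eq h (heven u hu) with h | h
    · exact ht h
    · rw [multidegree_eq_zero.1 h, mem_support_iff] at hu
      exact hu hf0
  simp only [cubicFunctionalMonomial, hmulti, false_and, if_false, Finset.sum_const_zero, mul_zero]

end CubicFunctional

section FiniteQuotient

variable {σ R M : Type*} [CommRing R] [AddCommGroup M] [Module R M]

lemma finite_quotient_of_X_mem_radical [Finite σ] {I : Ideal (MvPolynomial σ R)}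
    (h : ∀ i, X i ∈ I.radical) : Module.Finite R (MvPolynomial σ R ⧸ I) := by
  have hint (f : MvPolynomial σ R) : IsIntegral R (Ideal.Quotient.mk I f) := by
    induction f using MvPolynomial.induction_on with
    | C r => exact isIntegral_algebraMap
    | add f g hf hg => exact map_add (Ideal.Quotient.mk I) f g ▸ hf.add hg
    | mul_X f i hf =>
      obtain ⟨d, hd⟩ := h i
      rw [map_mul]
      refine hf.mul (.of_pow d.succ_pos ?_)
      rw [← map_pow, Ideal.Quotient.eq_zero_iff_mem.2 (I.pow_mem_of_pow_mem hd d.le_succ)]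
      exact isIntegral_zero
  have : Algebra.IsIntegral R (MvPolynomial σ R ⧸ I) :=
    ⟨Ideal.Quotient.mk_surjective.forall.2 hint⟩
  exact Algebra.IsIntegral.finite

lemma span_le_ker (L : MvPolynomial σ R →ₗ[R] M) {S : Set (MvPolynomial σ R)}
    (h : ∀ t, ∀ f ∈ S, L (monomial t 1 * f) = 0) :
    (Ideal.span S).restrictScalars R ≤ LinearMap.ker L := by
  rw [Ideal.span, ← Submodule.span_smul_of_span_eq_top (basisMonomials σ R).span_eq,
    Submodule.span_le]
  rintro _ ⟨_, ⟨t, rfl⟩, f, hf, rfl⟩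
  simpa using h t f hf

lemma finrank_quotient_lt_finrank_quotient {K V : Type*} [Field K] [AddCommGroup V] [Module K V]
    {p q : Submodule K V} [Module.Finite K (V ⧸ p)] (h : p < q) :
    Module.finrank K (V ⧸ q) < Module.finrank K (V ⧸ p) := by
  rw [← (Submodule.quotientQuotientEquivQuotient p q h.le).finrank_eq,
    ← Submodule.finrank_quotient_add_finrank (q.map p.mkQ)]
  refine Nat.lt_add_of_pos_right (Nat.pos_of_ne_zero fun h0 => h.not_ge ?_)
  rwa [Submodule.finrank_eq_zero, ← le_bot_iff, Submodule.map_le_iff_le_comap,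
    Submodule.comap_bot, Submodule.ker_mkQ] at h0

end FiniteQuotient

section Invariants

variable {n : ℕ}

lemma bAct_one_left (σ : Equiv.Perm (Fin n)) : bAct n 1 σ = rename (Sum.map σ σ) :=
  MvPolynomial.algHom_ext <| by rintro (i | i) <;> simp [bAct]

lemma bAct_one_right_monomial (ε : Fin n → ℤˣ) (s : Fin n ⊕ Fin n →₀ ℕ) (c : ℂ) :
    bAct n ε 1 (monomial s c) = (∏ i, ((ε i : ℤ) : ℂ) ^ multidegree s i) • monomial s c := by
  rw [bAct, aeval_monomial, monomial_eq, Finsupp.prod_fintype _ _ (by simp),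
    Finsupp.prod_fintype _ _ (by simp), Fintype.prod_sum_type, Fintype.prod_sum_type]
  simp only [multidegree, Sum.elim_inl, Sum.elim_inr, Equiv.Perm.coe_one, id, smul_eq_C_mul,
    mul_pow, Finset.prod_mul_distrib, algebraMap_eq, map_mul, map_prod, map_pow, pow_add]
  ring

lemma coeff_bAct_one_right (ε : Fin n → ℤˣ) (s : Fin n ⊕ Fin n →₀ ℕ)
    (f : MvPolynomial (Fin n ⊕ Fin n) ℂ) :
    coeff s (bAct n ε 1 f) = (∏ i, ((ε i : ℤ) : ℂ) ^ multidegree s i) * coeff s f := by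
  induction f using MvPolynomial.induction_on' with
  | monomial t c =>
    rw [bAct_one_right_monomial, coeff_smul, smul_eq_mul, coeff_monomial]
    split_ifs with h
    · rw [h]
    · rw [mul_zero, mul_zero]
  | add f g hf hg => rw [map_add, coeff_add, coeff_add, hf, hg, mul_add]

variable {f : MvPolynomial (Fin n ⊕ Fin n) ℂ}

lemma isDiagSymmetric_of_bAct (hf : ∀ ε σ, bAct n ε σ f = f) : IsDiagSymmetric f := fun σ => by
  rw [← bAct_one_left, hf]

lemma even_multidegree_of_bAct (hf : ∀ ε σ, bAct n ε σ f = f) {s : Fin n ⊕ Fin n →₀ ℕ}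
    (hs : s ∈ f.support) (i : Fin n) : Even (multidegree s i) := by
  have h := coeff_bAct_one_right (Function.update 1 i (-1)) s f
  rw [hf, Fintype.prod_eq_single i fun j hj => by simp [hj], Function.update_self, Units.val_neg,
    Units.val_one, Int.cast_neg, Int.cast_one] at h
  by_contra hodd
  rw [(Nat.not_even_iff_odd.1 hodd).neg_one_pow, neg_one_mul] at h
  exact mem_support_iff.1 hs (self_eq_neg.1 h)

end Invariants

section DiagonalIdeal

variable {n : ℕ} {f : MvPolynomial (Fin n ⊕ Fin n) ℂ}

lemma diagIdeal_le_leadingForms (n : ℕ) :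
    (diagIdeal n).restrictScalars ℂ ≤ leadingForms (orbitMap n (seed n ℂ)) :=
  (actsAsMulX_orbitMap n fun _ => odd_of_seed_ne_zero).span_le_leadingForms fun _ hf =>
    mem_leadingForms_of_even (isDiagSymmetric_of_bAct hf.1)
      (fun _ hs => even_multidegree_of_bAct hf.1 hs) hf.2

lemma coeff_eq_zero_of_mem_diagIdeal (hf : f ∈ diagIdeal n) {s : Fin n ⊕ Fin n →₀ ℕ}
    (hs : multidegree s = 1) : coeff s f = 0 := by
  refine span_le_ker (lcoeff ℂ s) (fun t g hg => ?_) hf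
  rw [lcoeff_apply, coeff_monomial_mul', one_mul]
  refine ite_eq_right_iff.2 fun ht => ?_
  by_contra hne
  have hzero : multidegree (s - t) = 0 := by
    funext i
    have heven := even_multidegree_of_bAct hg.1 (mem_support_iff.2 hne) i
    have hle : multidegree (s - t) i ≤ 1 := by
      have h := congrFun hs i
      rw [← tsub_add_cancel_of_le ht, multidegree_add] at h
      exact (Nat.le_add_right _ _).trans_eq h
    exact Nat.lt_one_iff.1 (lt_of_le_of_ne hle fun h => by simp [h] at heven)
  exact hne (multidegree_eq_zero.1 hzero ▸ hg.2)

lemma cubicFunctional_eq_zero_of_mem_diagIdeal (hf : f ∈ diagIdeal n) :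
    cubicFunctional (Fin n) ℂ f = 0 :=
  span_le_ker (cubicFunctional (Fin n) ℂ) (fun t _ hg =>
    cubicFunctional_monomial_mul_eq_zero t (isDiagSymmetric_of_bAct hg.1)
      (fun _ hs => even_multidegree_of_bAct hg.1 hs) hg.2) hf

lemma orbitSum_cubicExponent_notMem_diagIdeal (hn : 4 ≤ n) (i : Fin n) :
    orbitSum ℂ (cubicExponent i) ∉ diagIdeal n := fun h => by
  have h0 := cubicFunctional_eq_zero_of_mem_diagIdeal h
  rw [cubicFunctional_orbitSum_cubicExponent, Fintype.card_fin] at h0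
  exact mul_ne_zero (Nat.cast_ne_zero.2 Fintype.card_ne_zero) (cubicWeight_three_ne_zero hn) h0

lemma sum_smul_orbitSum_squarefreeExponent_notMem_diagIdeal {c : Fin (n + 1) → ℂ} (hc : c ≠ 0) :
    ∑ k, c k • orbitSum ℂ (squarefreeExponent n k) ∉ diagIdeal n := fun h => by
  refine hc (funext fun k => ?_)
  have hk := coeff_eq_zero_of_mem_diagIdeal h (multidegree_squarefreeExponent n k)
  have hne (j : Fin (n + 1)) (hj : j ≠ k) :
      coeff (squarefreeExponent n k) (c j • orbitSum ℂ (squarefreeExponent n j)) = 0 := by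
    rw [coeff_smul, coeff_orbitSum_eq_zero, smul_zero]
    rw [yDegree_squarefreeExponent k.is_le, yDegree_squarefreeExponent j.is_le]
    exact fun h => hj (Fin.ext h.symm)
  rw [coeff_sum, Fintype.sum_eq_single k hne, coeff_smul] at hk
  exact (smul_eq_zero.1 hk).resolve_right (coeff_orbitSum_self_ne_zero _)

lemma diagIdeal_lt_leadingForms (hn : 4 ≤ n) :
    (diagIdeal n).restrictScalars ℂ < leadingForms (orbitMap n (seed n ℂ)) := by
  refine lt_of_le_not_ge (diagIdeal_le_leadingForms n) fun hle => ?_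
  rcases orbitSum_mem_leadingForms_or (K := ℂ) (⟨0, by lia⟩ : Fin n) with h | ⟨c, hc, h⟩
  · exact orbitSum_cubicExponent_notMem_diagIdeal hn _ (hle h)
  · exact sum_smul_orbitSum_squarefreeExponent_notMem_diagIdeal hc (hle h)

/-- The polynomial with roots `x₁², …, xₙ²` if `c` is `Sum.inl`, or `y₁², …, yₙ²` if `c` is
`Sum.inr`. Its coefficients other than the leading one are invariants without constant term. -/
noncomputable def squaresPolynomial (c : Fin n → Fin n ⊕ Fin n) :
    Polynomial (MvPolynomial (Fin n ⊕ Fin n) ℂ) :=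
  ∏ j, (Polynomial.X - Polynomial.C (X (c j) ^ 2))

lemma natDegree_squaresPolynomial (c : Fin n → Fin n ⊕ Fin n) :
    (squaresPolynomial c).natDegree = n := by
  rw [squaresPolynomial, Polynomial.natDegree_finsetProd_X_sub_C_eq_card, Finset.card_fin]

lemma coeff_squaresPolynomial_mem_diagIdeal {c : Fin n → Fin n ⊕ Fin n}
    (hc : ∀ ε σ j, bAct n ε σ (X (c j)) = ((ε j : ℤ) : ℂ) • X (c (σ j))) {k : ℕ} (hk : k < n) :
    (squaresPolynomial c).coeff k ∈ diagIdeal n := by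
  refine Ideal.subset_span ⟨fun ε σ => ?_, ?_⟩
  · have hsq (j) : bAct n ε σ (X (c j) ^ 2) = X (c (σ j)) ^ 2 := by
      have hε : ((ε j : ℤ) : ℂ) ^ 2 = 1 := by
        rw [← Int.cast_pow, ← Units.val_pow_eq_pow_val, Int.units_sq, Units.val_one, Int.cast_one]
      rw [map_pow, hc, smul_pow, hε, one_smul]
    have hmap : (squaresPolynomial c).map (bAct n ε σ).toRingHom = squaresPolynomial c := by
      rw [squaresPolynomial, Polynomial.map_prod]
      conv_rhs => rw [← Equiv.prod_comp σ]
      refine Finset.prod_congr rfl fun j _ => ?_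
      rw [Polynomial.map_sub, Polynomial.map_X, Polynomial.map_C]
      exact congrArg (Polynomial.X - Polynomial.C ·) (hsq j)
    conv_rhs => rw [← hmap, Polynomial.coeff_map]
    rfl
  · rw [← Polynomial.coeff_map, squaresPolynomial, Polynomial.map_prod]
    simp [hk.ne]

lemma X_mem_radical_diagIdeal_of_bAct {c : Fin n → Fin n ⊕ Fin n}
    (hc : ∀ ε σ j, bAct n ε σ (X (c j)) = ((ε j : ℤ) : ℂ) • X (c (σ j))) (i : Fin n) :
    X (c i) ∈ (diagIdeal n).radical := by
  have hdeg := natDegree_squaresPolynomial c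
  have hmonic : (squaresPolynomial c).Monic :=
    Polynomial.monic_prod_of_monic _ _ fun j _ => Polynomial.monic_X_sub_C _
  have hroot : (squaresPolynomial c).IsRoot (X (c i) ^ 2) := by
    rw [Polynomial.IsRoot, squaresPolynomial, Polynomial.eval_prod]
    exact Finset.prod_eq_zero (Finset.mem_univ i) (by simp)
  have hweak : (squaresPolynomial c).IsWeaklyEisensteinAt (diagIdeal n) :=
    ⟨fun hk => coeff_squaresPolynomial_mem_diagIdeal hc (hdeg ▸ hk)⟩
  refine ⟨2 * n, ?_⟩
  rw [pow_mul]
  exact hweak.pow_natDegree_le_of_root_of_monic_mem hroot hmonic n hdeg.le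

lemma X_mem_radical_diagIdeal : ∀ v : Fin n ⊕ Fin n, X v ∈ (diagIdeal n).radical
  | Sum.inl i => X_mem_radical_diagIdeal_of_bAct (c := Sum.inl) (fun _ _ _ => by simp [bAct]) i
  | Sum.inr i => X_mem_radical_diagIdeal_of_bAct (c := Sum.inr) (fun _ _ _ => by simp [bAct]) i

end DiagonalIdeal

section LowerBound

variable {n : ℕ} {K : Type*} [Field K] [CharZero K]

lemma single_mem_range_orbitMap {m : Fin n → ℤ} (hm : m ∈ box (Fin n) n) :
    Pi.single m 1 ∈ LinearMap.range (orbitMap n (seed n K)) := by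
  have hacts := actsAsMulX_orbitMap n (v := seed n K) fun _ => odd_of_seed_ne_zero
  refine single_mem_of_mem (fun i _ => hacts.map_range (Sum.inl i))
    (fun i _ => hacts.map_range (Sum.inr i)) ⟨1, orbitMap_one _ _⟩ ?_ support_seed_subset_box hm
  exact fun h => one_ne_zero (seed_apply_odd.symm.trans (congrFun h (oddWeight n)))

lemma pow_le_finrank_quotient_leadingForms
    [Module.Finite K (MvPolynomial (Fin n ⊕ Fin n) K ⧸ leadingForms (orbitMap n (seed n K)))] :
    (2 * n + 1) ^ n ≤ Module.finrank K
      (MvPolynomial (Fin n ⊕ Fin n) K ⧸ leadingForms (orbitMap n (seed n K))) := by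
  let w (a : Fin n → Fin (2 * n + 1)) (i : Fin n) : ℤ := (a i : ℕ)
  have hw : Function.Injective w := fun a b h => funext fun i =>
    Fin.ext (Int.ofNat_inj.1 (congrFun h i))
  have hbox (a) : w a ∈ box (Fin n) n := mem_box.2 fun i =>
    ⟨by positivity, by have := (a i).is_lt; lia⟩
  have hli : LinearIndependent K fun a => (Pi.single (w a) 1 : (Fin n → ℤ) → K) :=
    (Pi.linearIndependent_single_one (Fin n → ℤ) K).comp w hw
  simpa using card_le_finrank_quotient_leadingForms hli fun a => single_mem_range_orbitMap (hbox a)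

end LowerBound

end DiagonalCoinvariants

open DiagonalCoinvariants

/-- For every `n ≥ 4`, `dim_ℂ R_W ≥ (2n+1)ⁿ + 1` for the diagonal coinvariant ring
of `W(Bₙ)`. -/
theorem dim_diag_coinv_gt (n : ℕ) (hn : 4 ≤ n) :
    (2 * n + 1) ^ n + 1 ≤
      Module.finrank ℂ (MvPolynomial (Fin n ⊕ Fin n) ℂ ⧸ diagIdeal n) := by
  have hlt := diagIdeal_lt_leadingForms hn
  let e := Submodule.Quotient.restrictScalarsEquiv ℂ (diagIdeal n)
  have := finite_quotient_of_X_mem_radical (X_mem_radical_diagIdeal (n := n))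
  have := Module.Finite.equiv e.symm
  have := Module.Finite.of_surjective _ (Submodule.factor_surjective hlt.le)
  calc (2 * n + 1) ^ n
      ≤ Module.finrank ℂ (_ ⧸ leadingForms (orbitMap n (seed n ℂ))) :=
        pow_le_finrank_quotient_leadingForms
    _ < Module.finrank ℂ (_ ⧸ (diagIdeal n).restrictScalars ℂ) :=
        finrank_quotient_lt_finrank_quotient hlt
    _ = Module.finrank ℂ (_ ⧸ diagIdeal n) := e.finrank_eq
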